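/- arXiv:2311.10262 — 3 statements merged into one kernel-verified Lean document; each statement's English description precedes it below -/
import Mathlib

section
/- For every s ∈ (0,2], if the series Σ_w φ_s(A_w) over all nonempty words w converges, then the Hausdorff dimension of the Rauzy gasket satisfies dimH X ≤ s. In particular dimH X ≤ s_A. -/
/-!
Write `N = σ₁(A_w)` and `M = σ₁(A_w⁻¹)`, so that `σ₂/σ₁ = M/N²` and `σ₃/σ₁ = 1/(MN)`, and call
`f_w(Δ̃)` the cylinder of `w`.

The column sums of every `A_w` satisfy the triangle inequality (`colSum_Aw`). Hence, if the last two
letters of `w` differ, the three columns of `A_w` have comparable sizes (`colSum_comparable`), each of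
order `N`. For such `w` the cylinder is a triangle with two-sided control. Its diameter is `O(M/N²)`,
because the `2 × 2` minors of `A_w` are the entries of `A_w⁻¹` (`GoodMat.proj_sub_le`). The largest of
these minors gives an edge of length at least a multiple of `M/N²`, while the area is `O(1/N³)` since
`det A_w = 1`; so the triangle has width `O(1/(MN))` transversally to that edge (`GoodMat.thin`).
Therefore one set of diameter `O(σ₂/σ₁)`, or `O(σ₂/σ₃)` slices of diameter `O(σ₃/σ₁)`, cover the
cylinder, with total `s`-weight `O(φ_s(A_w))` in both ranges of `s` (`exists_cover`).

A point of the gasket that lies in only finitely many cylinders of words with distinct last two letters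
is `f_u(e_b)` for some word `u` and vertex `e_b`, since the cylinders of `b^k` shrink to `e_b`
(`infinite_cylinders`). These points are countably many. All others are covered by the cylinders of the
words with distinct last two letters outside any given finite set, so convergence of the series makes
their `s`-dimensional Hausdorff measure vanish (`dimH_gasket_le_of_summable`). The bound by `s_A`
follows by letting `s` decrease to `s_A`, or, if `s_A = 2`, because the gasket is planar.
-/

open Matrix MeasureTheory

noncomputable section

abbrev M3 := Matrix (Fin 3) (Fin 3) ℝ
abbrev E3 := EuclideanSpace ℝ (Fin 3)

/-- The Rauzy generators. -/
def A : Fin 3 → M3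
  | 0 => !![1,1,1; 0,1,0; 0,0,1]
  | 1 => !![1,0,0; 1,1,1; 0,0,1]
  | 2 => !![1,0,0; 0,1,0; 1,1,1]

/-- Product of the matrices along a word. -/
def Aw (w : List (Fin 3)) : M3 := (w.map A).prod

/-- Euclidean norm of a vector in `ℝ³`. -/
def enorm3 (v : Fin 3 → ℝ) : ℝ := Real.sqrt (v 0 ^ 2 + v 1 ^ 2 + v 2 ^ 2)

/-- Largest singular value = `ℓ²` operator norm. -/
def sval1 (g : M3) : ℝ := ‖(Matrix.toEuclideanLin g).toContinuousLinearMap‖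

/-- Smallest singular value (for invertible `g`): `σ₃(g) = σ₁(g⁻¹)⁻¹`. -/
def sval3 (g : M3) : ℝ := (sval1 g⁻¹)⁻¹

/-- Middle singular value (for invertible `g`): `σ₂ = |det g|·σ₁(g⁻¹)/σ₁(g)`. -/
def sval2 (g : M3) : ℝ := |g.det| * sval1 g⁻¹ / sval1 g

def basis3 (i : Fin 3) : Fin 3 → ℝ := Pi.single i 1

def omega3 (v : Fin 3 → ℝ) : ℝ := v 0 + v 1 + v 2

def ofE : E3 → (Fin 3 → ℝ) := WithLp.equiv 2 (Fin 3 → ℝ)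
def toE : (Fin 3 → ℝ) → E3 := (WithLp.equiv 2 (Fin 3 → ℝ)).symm

/-- The standard 2-simplex in `ℝ³` (with the Euclidean metric). -/
def simplex : Set E3 := {x | (∀ i, 0 ≤ ofE x i) ∧ omega3 (ofE x) = 1}

/-- The projective action of the word `w` on the simplex. -/
def fmap (w : List (Fin 3)) (x : E3) : E3 :=
  toE ((omega3 ((Aw w) *ᵥ ofE x))⁻¹ • ((Aw w) *ᵥ ofE x))

/-- The Rauzy gasket. -/
def gasket : Set E3 :=
  ⋂ n : ℕ, ⋃ w ∈ {w : List (Fin 3) | w.length = n + 1}, fmap w '' simplex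

/-- Falconer's singular value function. -/
def phi (s : ℝ) (g : M3) : ℝ :=
  if s ≤ 1 then (sval2 g / sval1 g) ^ s
  else (sval2 g / sval1 g) * (sval3 g / sval1 g) ^ (s - 1)

/-- The affinity exponent of the Rauzy semigroup. -/
def sA : ℝ :=
  sSup {s : ℝ | s ∈ Set.Ioc (0:ℝ) 2 ∧
    ¬ Summable fun w : {w : List (Fin 3) // w ≠ []} => phi s (Aw w.1)}

/-- A word has its last `k` letters not all the same. -/
def LastNotAllSame (w : List (Fin 3)) (k : ℕ) : Prop :=
  k ≤ w.length ∧ ¬ ∃ c, ∀ x ∈ w.drop (w.length - k), x = c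

/-- A word's last two letters are different. -/
def LastTwoDiff (w : List (Fin 3)) : Prop :=
  ∃ u a b, w = u ++ [a, b] ∧ a ≠ b

/-- The Cartan projection `κ(g) = (log σ₁, log σ₂, log σ₃)`. -/
def kappa (g : M3) : Fin 3 → ℝ :=
  ![Real.log (sval1 g), Real.log (sval2 g), Real.log (sval3 g)]

/-- The linear functional `ψ_s` on the Cartan algebra. -/
def psi (s : ℝ) (lam : Fin 3 → ℝ) : ℝ := (lam 0 - lam 1) + (s - 1) * (lam 0 - lam 2)

end

/-! ### Operator norm versus entries, and column sums of words -/

theorem abs_entry_le_sval1 (g : M3) (i j : Fin 3) : |g i j| ≤ sval1 g := by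
  have h := (Matrix.toEuclideanLin g).toContinuousLinearMap.le_opNorm (EuclideanSpace.single j 1)
  have h2 := PiLp.norm_apply_le
    ((Matrix.toEuclideanLin g).toContinuousLinearMap (EuclideanSpace.single j (1:ℝ))) i
  have h3 : ((Matrix.toEuclideanLin g).toContinuousLinearMap (EuclideanSpace.single j (1:ℝ))) i
      = g i j := by
    simp [Matrix.toLpLin_apply]
  rw [h3, Real.norm_eq_abs] at h2
  simp only [PiLp.norm_single, norm_one, mul_one] at h
  exact h2.trans h

theorem norm_le_sum_abs (x : E3) : ‖x‖ ≤ ∑ i, |x i| := by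
  rw [EuclideanSpace.norm_eq]
  apply Real.sqrt_le_iff.2
  refine ⟨Finset.sum_nonneg fun i _ => abs_nonneg _, ?_⟩
  simp only [Real.norm_eq_abs, Fin.sum_univ_three]
  nlinarith [abs_nonneg (x 0), abs_nonneg (x 1), abs_nonneg (x 2),
    mul_nonneg (abs_nonneg (x 0)) (abs_nonneg (x 1)),
    mul_nonneg (abs_nonneg (x 0)) (abs_nonneg (x 2)),
    mul_nonneg (abs_nonneg (x 1)) (abs_nonneg (x 2))]

theorem sval1_le_sum (g : M3) : sval1 g ≤ ∑ i, ∑ j, |g i j| := by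
  refine ContinuousLinearMap.opNorm_le_bound _ (by positivity) fun x => ?_
  refine (norm_le_sum_abs _).trans ?_
  rw [Finset.sum_mul]
  refine Finset.sum_le_sum fun i _ => ?_
  have : ((Matrix.toEuclideanLin g).toContinuousLinearMap x) i = ∑ j, g i j * x j := by
    simp [Matrix.toLpLin_apply, Matrix.mulVec, dotProduct]
  rw [this, Finset.sum_mul]
  refine (Finset.abs_sum_le_sum_abs _ _).trans (Finset.sum_le_sum fun j _ => ?_)
  rw [abs_mul]
  exact mul_le_mul_of_nonneg_left (by simpa using PiLp.norm_apply_le x j) (abs_nonneg _)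

/-- The sum of the entries in column `j`, i.e. `ω` of the `j`-th column. -/
def colSum (g : M3) (j : Fin 3) : ℝ := g 0 j + g 1 j + g 2 j

theorem Aw_append (u v : List (Fin 3)) : Aw (u ++ v) = Aw u * Aw v := by
  simp [Aw]

theorem Aw_nonneg (w : List (Fin 3)) : ∀ i j, 0 ≤ Aw w i j := by
  induction w with
  | nil => intro i j; fin_cases i <;> fin_cases j <;> simp [Aw]
  | cons a w ih =>
    intro i j
    have : Aw (a :: w) = A a * Aw w := by simp [Aw]
    rw [this, Matrix.mul_apply]
    refine Finset.sum_nonneg fun k _ => mul_nonneg ?_ (ih k j)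
    fin_cases a <;> fin_cases i <;> fin_cases k <;> simp [A]

theorem Aw_det (w : List (Fin 3)) : (Aw w).det = 1 := by
  induction w with
  | nil => simp [Aw]
  | cons a w ih =>
    have : Aw (a :: w) = A a * Aw w := by simp [Aw]
    rw [this, Matrix.det_mul, ih]
    fin_cases a <;> simp [A, Matrix.det_fin_three]

theorem colSum_mul_A (g : M3) (b j : Fin 3) :
    colSum (g * A b) j = if j = b then colSum g j else colSum g j + colSum g b := by
  fin_cases b <;> fin_cases j <;> simp [colSum, A, Matrix.mul_apply, Fin.sum_univ_three] <;> ring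

/-- The column sums of `A_w` are `≥ 1` and satisfy the triangle inequality: the difference
`ω_j + ω_k - ω_i` never decreases when a letter is appended. -/
theorem colSum_Aw (w : List (Fin 3)) :
    (∀ j, 1 ≤ colSum (Aw w) j) ∧
      colSum (Aw w) 0 ≤ colSum (Aw w) 1 + colSum (Aw w) 2 ∧
      colSum (Aw w) 1 ≤ colSum (Aw w) 0 + colSum (Aw w) 2 ∧
      colSum (Aw w) 2 ≤ colSum (Aw w) 0 + colSum (Aw w) 1 := by
  induction w using List.reverseRecOn with
  | nil =>
    refine ⟨fun j => ?_, ?_⟩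
    · fin_cases j <;> simp [Aw, colSum]
    · simp [Aw, colSum]
  | append_singleton w b ih =>
    obtain ⟨h1, h2, h3, h4⟩ := ih
    have : Aw (w ++ [b]) = Aw w * A b := by simp [Aw]
    have e0 := h1 0
    have e1 := h1 1
    have e2 := h1 2
    simp only [this, colSum_mul_A]
    refine ⟨fun j => ?_, ?_⟩
    · fin_cases b <;> fin_cases j <;> simp <;> linarith
    · fin_cases b <;> simp <;> refine ⟨?_, ?_, ?_⟩ <;> linarith

/-- If the last two letters of `w` differ, all columns of `A_w` are comparable. -/
theorem colSum_comparable {w : List (Fin 3)} (hw : LastTwoDiff w) (i j : Fin 3) :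
    colSum (Aw w) i ≤ 3 * colSum (Aw w) j := by
  obtain ⟨u, a, b, rfl, hab⟩ := hw
  have : Aw (u ++ [a, b]) = Aw u * A a * A b := by simp [Aw, mul_assoc]
  obtain ⟨h1, h2, h3, h4⟩ := colSum_Aw u
  have e0 := h1 0
  have e1 := h1 1
  have e2 := h1 2
  simp only [this, colSum_mul_A]
  fin_cases a <;> fin_cases b <;> first | (exact absurd rfl hab) | skip
  all_goals fin_cases i <;> fin_cases j <;> simp <;> linarith

theorem Aw_inv (w : List (Fin 3)) : (Aw w)⁻¹ = (Aw w).adjugate := by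
  rw [Matrix.inv_def, Aw_det]; simp

theorem adjugate_entry (g : M3) (k m : Fin 3) :
    g.adjugate k m = g (m + 1) (k + 1) * g (m + 2) (k + 2) - g (m + 2) (k + 1) * g (m + 1) (k + 2) := by
  rw [Matrix.adjugate_fin_three]
  fin_cases k <;> fin_cases m <;> simp <;> ring

/-! ### Well-conditioned words -/

/-- The size data of a well-conditioned unimodular nonnegative matrix `g`: up to absolute constants,
`N` is the size of `g` and of each of its columns, and `M` is the size of `g⁻¹ = adj g`. -/
structure GoodMat (g : M3) (N M : ℝ) : Prop where
  nonneg : ∀ i j, 0 ≤ g i j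
  det_eq : g.det = 1
  entry_le : ∀ i j, g i j ≤ N
  le_col : ∀ j, N ≤ 9 * colSum g j
  adj_le : ∀ i j, |g.adjugate i j| ≤ M
  le_adj : ∃ k m, M ≤ 9 * |g.adjugate k m|
  N_le : N ≤ 18 * M ^ 2
  N_pos : 0 < N
  M_pos : 0 < M

theorem exists_sum_le (B : M3) : ∃ k m, ∑ i, ∑ j, |B i j| ≤ 9 * |B k m| := by
  obtain ⟨⟨k, m⟩, -, h⟩ := Finset.exists_max_image (Finset.univ : Finset (Fin 3 × Fin 3))
    (fun p => |B p.1 p.2|) ⟨(0, 0), Finset.mem_univ _⟩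
  refine ⟨k, m, ?_⟩
  have h' : ∀ i j, |B i j| ≤ |B k m| := fun i j => h (i, j) (Finset.mem_univ _)
  simp only [Fin.sum_univ_three]
  linarith [h' 0 0, h' 0 1, h' 0 2, h' 1 0, h' 1 1, h' 1 2, h' 2 0, h' 2 1, h' 2 2]

theorem abs_adjugate_le {B : M3} {M : ℝ} (hB : ∀ i j, |B i j| ≤ M) (i j : Fin 3) :
    |B.adjugate i j| ≤ 2 * M ^ 2 := by
  rw [adjugate_entry]
  have hp : ∀ a b c d, |B a b * B c d| ≤ M ^ 2 := fun a b c d => by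
    rw [abs_mul, sq]
    exact mul_le_mul (hB _ _) (hB _ _) (abs_nonneg _) ((abs_nonneg _).trans (hB a b))
  refine (abs_sub _ _).trans ?_
  linarith [hp (j + 1) (i + 1) (j + 2) (i + 2), hp (j + 2) (i + 1) (j + 1) (i + 2)]

theorem goodMat_Aw {w : List (Fin 3)} (hw : LastTwoDiff w) :
    GoodMat (Aw w) (sval1 (Aw w)) (sval1 (Aw w)⁻¹) := by
  have hn := Aw_nonneg w
  have hcol := (colSum_Aw w).1
  have hentry : ∀ i j, Aw w i j ≤ sval1 (Aw w) := fun i j =>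
    (le_abs_self _).trans (abs_entry_le_sval1 _ i j)
  have hadj : ∀ i j, |(Aw w).adjugate i j| ≤ sval1 (Aw w)⁻¹ := fun i j => by
    rw [← Aw_inv]; exact abs_entry_le_sval1 _ i j
  have hM0 : 0 ≤ sval1 (Aw w)⁻¹ := norm_nonneg _
  have hN : 0 < sval1 (Aw w) := by
    have := hcol 0
    unfold colSum at this
    linarith [hentry 0 0, hentry 1 0, hentry 2 0]
  have hNM : sval1 (Aw w) ≤ 18 * sval1 (Aw w)⁻¹ ^ 2 := by
    obtain ⟨k, m, hkm⟩ := exists_sum_le (Aw w)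
    have e : (Aw w).adjugate.adjugate = Aw w := by
      rw [Matrix.adjugate_adjugate _ (by simp), Aw_det]; simp
    have := abs_adjugate_le hadj k m
    rw [e] at this
    linarith [sval1_le_sum (Aw w)]
  refine ⟨hn, Aw_det w, hentry, fun j => ?_, hadj, ?_, hNM, hN, ?_⟩
  · have h := sval1_le_sum (Aw w)
    simp only [Fin.sum_univ_three, abs_of_nonneg (hn _ _)] at h
    have h0 := colSum_comparable hw 0 j
    have h1 := colSum_comparable hw 1 j
    have h2 := colSum_comparable hw 2 j
    unfold colSum at *
    linarith
  · obtain ⟨k, m, hkm⟩ := exists_sum_le (Aw w).adjugate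
    refine ⟨k, m, le_trans ?_ hkm⟩
    rw [← Aw_inv]
    exact sval1_le_sum _
  · rcases hM0.lt_or_eq with h | h
    · exact h
    · rw [← h] at hNM; norm_num at hNM; linarith

/-! ### Geometry of a cylinder -/

/-- Coordinates of a point of the simplex, as a plain vector. -/
def InSimplex (x : Fin 3 → ℝ) : Prop := (∀ i, 0 ≤ x i) ∧ omega3 x = 1

theorem InSimplex.le_one {x : Fin 3 → ℝ} (hx : InSimplex x) (i : Fin 3) : x i ≤ 1 := by
  obtain ⟨h, h1⟩ := hx
  unfold omega3 at h1
  have := h 0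
  have := h 1
  have := h 2
  fin_cases i <;> simp <;> linarith

/-- Radial projection onto the plane `ω = 1`. -/
noncomputable def proj (X : Fin 3 → ℝ) : Fin 3 → ℝ := (omega3 X)⁻¹ • X

theorem omega3_smul (c : ℝ) (X : Fin 3 → ℝ) : omega3 (c • X) = c * omega3 X := by
  simp [omega3]; ring

theorem omega3_proj {X : Fin 3 → ℝ} (hX : 0 < omega3 X) : omega3 (proj X) = 1 := by
  rw [proj, omega3_smul, inv_mul_cancel₀ hX.ne']

theorem omega3_mulVec (g : M3) (x : Fin 3 → ℝ) :
    omega3 (g *ᵥ x) = colSum g 0 * x 0 + colSum g 1 * x 1 + colSum g 2 * x 2 := by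
  simp [omega3, colSum, Matrix.mulVec, dotProduct, Fin.sum_univ_three]; ring

theorem GoodMat.le_omega {g : M3} {N M : ℝ} (hg : GoodMat g N M) {x : Fin 3 → ℝ}
    (hx : InSimplex x) : N ≤ 9 * omega3 (g *ᵥ x) := by
  rw [omega3_mulVec]
  obtain ⟨h, h1⟩ := hx
  unfold omega3 at h1
  have a0 := mul_le_mul_of_nonneg_right (hg.le_col 0) (h 0)
  have a1 := mul_le_mul_of_nonneg_right (hg.le_col 1) (h 1)
  have a2 := mul_le_mul_of_nonneg_right (hg.le_col 2) (h 2)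
  have : N = N * x 0 + N * x 1 + N * x 2 := by
    rw [← mul_add, ← mul_add, h1, mul_one]
  linarith

/-- Cross products transform by the cofactor matrix: `gx × gy = (adj g)ᵀ (x × y)`. -/
theorem cross_mulVec (g : M3) (x y : Fin 3 → ℝ) (m : Fin 3) :
    (g *ᵥ x) (m + 1) * (g *ᵥ y) (m + 2) - (g *ᵥ x) (m + 2) * (g *ᵥ y) (m + 1) =
      ∑ k, g.adjugate k m * (x (k + 1) * y (k + 2) - x (k + 2) * y (k + 1)) := by
  simp only [adjugate_entry, Fin.sum_univ_three, Matrix.mulVec, dotProduct]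
  fin_cases m <;> simp <;> ring

theorem GoodMat.cross_le {g : M3} {N M : ℝ} (hg : GoodMat g N M) {x y : Fin 3 → ℝ}
    (hx : InSimplex x) (hy : InSimplex y) (m : Fin 3) :
    |(g *ᵥ x) (m + 1) * (g *ᵥ y) (m + 2) - (g *ᵥ x) (m + 2) * (g *ᵥ y) (m + 1)| ≤ 3 * M := by
  rw [cross_mulVec]
  have hk : ∀ k, |g.adjugate k m * (x (k + 1) * y (k + 2) - x (k + 2) * y (k + 1))| ≤ M := by
    intro k
    rw [abs_mul]
    have h1 : |x (k + 1) * y (k + 2) - x (k + 2) * y (k + 1)| ≤ 1 := by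
      have a := mul_nonneg (hx.1 (k + 1)) (hy.1 (k + 2))
      have b := mul_nonneg (hx.1 (k + 2)) (hy.1 (k + 1))
      have a' := mul_le_one₀ (hx.le_one (k + 1)) (hy.1 (k + 2)) (hy.le_one (k + 2))
      have b' := mul_le_one₀ (hx.le_one (k + 2)) (hy.1 (k + 1)) (hy.le_one (k + 1))
      rw [abs_le]; constructor <;> linarith
    calc _ ≤ M * 1 := mul_le_mul (hg.adj_le k m) h1 (abs_nonneg _) hg.M_pos.le
      _ = M := mul_one M
  refine (Finset.abs_sum_le_sum_abs _ _).trans ?_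
  rw [Fin.sum_univ_three]
  linarith [hk 0, hk 1, hk 2]

/-- In each coordinate, the projective image of the simplex has extent `O(M / N²)`. -/
theorem GoodMat.proj_sub_le {g : M3} {N M : ℝ} (hg : GoodMat g N M) {x y : Fin 3 → ℝ}
    (hx : InSimplex x) (hy : InSimplex y) (a : Fin 3) :
    |proj (g *ᵥ x) a - proj (g *ᵥ y) a| ≤ 486 * (M / N ^ 2) := by
  have hX := hg.le_omega hx
  have hY := hg.le_omega hy
  have hN := hg.N_pos
  have hM := hg.M_pos
  have c0 := abs_le.1 (hg.cross_le hx hy 0)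
  have c1 := abs_le.1 (hg.cross_le hx hy 1)
  have c2 := abs_le.1 (hg.cross_le hx hy 2)
  set X := g *ᵥ x
  set Y := g *ᵥ y
  have hX0 : 0 < omega3 X := by linarith
  have hY0 : 0 < omega3 Y := by linarith
  have hnum : |X a * omega3 Y - Y a * omega3 X| ≤ 6 * M := by
    rw [abs_le]
    simp only [omega3]
    fin_cases a <;> simp at c0 c1 c2 ⊢ <;> constructor <;> nlinarith
  have e : proj X a - proj Y a = (X a * omega3 Y - Y a * omega3 X) / (omega3 X * omega3 Y) := by
    simp only [proj, Pi.smul_apply, smul_eq_mul]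
    field_simp
  rw [e, abs_div, abs_of_pos (mul_pos hX0 hY0), div_le_iff₀ (mul_pos hX0 hY0)]
  have hden : N ^ 2 ≤ 81 * (omega3 X * omega3 Y) := by nlinarith
  calc _ ≤ 6 * M := hnum
    _ = 6 * (M / N ^ 2) * N ^ 2 := by field_simp
    _ ≤ 6 * (M / N ^ 2) * (81 * (omega3 X * omega3 Y)) := by gcongr
    _ = _ := by ring

/-- For three points of the plane `ω = 1`, each coordinate minor of the edge vectors `F - P`, `Q - P`
is `0` or `± det (F, P, Q)`. -/
theorem minor_le_det {F P Q : Fin 3 → ℝ} (hF : omega3 F = 1) (hP : omega3 P = 1)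
    (hQ : omega3 Q = 1) (a b : Fin 3) :
    |(F a - P a) * (Q b - P b) - (F b - P b) * (Q a - P a)| ≤
      |∑ m, F m * (P (m + 1) * Q (m + 2) - P (m + 2) * Q (m + 1))| := by
  unfold omega3 at *
  obtain hF : F 2 = 1 - F 0 - F 1 := by linarith
  obtain hP : P 2 = 1 - P 0 - P 1 := by linarith
  obtain hQ : Q 2 = 1 - Q 0 - Q 1 := by linarith
  have key : ∀ s t : ℝ, (s = 0 ∨ s = t ∨ s = -t) → |s| ≤ |t| := by
    rintro s t (h | h | h) <;> simp [h]
  apply key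
  rw [Fin.sum_univ_three]
  fin_cases a <;> fin_cases b <;> simp [hF, hP, hQ] <;>
  first
    | (right; left; ring1)
    | (right; right; ring1)

theorem inSimplex_single (j : Fin 3) : InSimplex (Pi.single j 1) := by
  refine ⟨fun i => ?_, ?_⟩
  · fin_cases i <;> fin_cases j <;> simp
  · fin_cases j <;> simp [omega3]

theorem GoodMat.mulVec_nonneg {g : M3} {N M : ℝ} (hg : GoodMat g N M) {x : Fin 3 → ℝ}
    (hx : InSimplex x) (i : Fin 3) : 0 ≤ (g *ᵥ x) i := by
  rw [Matrix.mulVec, dotProduct]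
  exact Finset.sum_nonneg fun j _ => mul_nonneg (hg.nonneg i j) (hx.1 j)

theorem inSimplex_proj {X : Fin 3 → ℝ} (hX : ∀ i, 0 ≤ X i) (h : 0 < omega3 X) :
    InSimplex (proj X) :=
  ⟨fun i => mul_nonneg (inv_nonneg.2 h.le) (hX i), omega3_proj h⟩

theorem GoodMat.omega_pos {g : M3} {N M : ℝ} (hg : GoodMat g N M) {x : Fin 3 → ℝ}
    (hx : InSimplex x) : 0 < omega3 (g *ᵥ x) := by
  linarith [hg.le_omega hx, hg.N_pos]

theorem GoodMat.omega_single_le {g : M3} {N M : ℝ} (hg : GoodMat g N M) (j : Fin 3) :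
    omega3 (g *ᵥ Pi.single j 1) ≤ 3 * N := by
  have : omega3 (g *ᵥ Pi.single j 1) = colSum g j := by simp [omega3, colSum]
  rw [this, colSum]
  linarith [hg.entry_le 0 j, hg.entry_le 1 j, hg.entry_le 2 j]

/-- The projective image of the simplex is thin: some coordinate `a` (the one that varies most
along a suitably long edge of the image triangle) controls all the others up to `O(1 / (M N))`. -/
theorem GoodMat.thin {g : M3} {N M : ℝ} (hg : GoodMat g N M) :
    ∃ a, ∀ x y, InSimplex x → InSimplex y → ∀ b,
      |proj (g *ᵥ x) b - proj (g *ᵥ y) b| ≤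
        |proj (g *ᵥ x) a - proj (g *ᵥ y) a| + 236196 * (1 / (M * N)) := by
  have hN := hg.N_pos
  have hM := hg.M_pos
  obtain ⟨k, m, hkm⟩ := hg.le_adj
  -- the edge joining the images of the vertices `k + 1` and `k + 2`
  set XP := g *ᵥ Pi.single (k + 1) 1 with hXP
  set XQ := g *ᵥ Pi.single (k + 2) 1 with hXQ
  have hP0 : 0 < omega3 XP := hg.omega_pos (inSimplex_single _)
  have hQ0 : 0 < omega3 XQ := hg.omega_pos (inSimplex_single _)
  have hP9 : N ≤ 9 * omega3 XP := hg.le_omega (inSimplex_single _)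
  have hQ9 : N ≤ 9 * omega3 XQ := hg.le_omega (inSimplex_single _)
  have hP3 : omega3 XP ≤ 3 * N := hg.omega_single_le _
  have hQ3 : omega3 XQ ≤ 3 * N := hg.omega_single_le _
  have hPs : InSimplex (proj XP) :=
    inSimplex_proj (hg.mulVec_nonneg (inSimplex_single _)) hP0
  have hQs : InSimplex (proj XQ) :=
    inSimplex_proj (hg.mulVec_nonneg (inSimplex_single _)) hQ0
  have hcross : ∀ n, XP (n + 1) * XQ (n + 2) - XP (n + 2) * XQ (n + 1) = g.adjugate k n := by
    intro n
    rw [hXP, hXQ, cross_mulVec, Fin.sum_univ_three]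
    fin_cases k <;> simp
  set P := proj XP with hP
  set Q := proj XQ with hQ
  have hcross' : ∀ n, P (n + 1) * Q (n + 2) - P (n + 2) * Q (n + 1) =
      g.adjugate k n / (omega3 XP * omega3 XQ) := by
    intro n
    rw [← hcross]
    simp only [hP, hQ, proj, Pi.smul_apply, smul_eq_mul]
    field_simp
  obtain ⟨a, -, ha⟩ := Finset.exists_max_image (Finset.univ : Finset (Fin 3))
    (fun i => |Q i - P i|) ⟨0, Finset.mem_univ _⟩
  have ha : ∀ i, |Q i - P i| ≤ |Q a - P a| := fun i => ha i (Finset.mem_univ _)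
  have hva : M / (162 * N ^ 2) ≤ |Q a - P a| := by
    have e : g.adjugate k m / (omega3 XP * omega3 XQ) =
        P (m + 1) * (Q (m + 2) - P (m + 2)) - P (m + 2) * (Q (m + 1) - P (m + 1)) := by
      rw [← hcross']; ring
    have hb : ∀ i j, |P i * (Q j - P j)| ≤ |Q a - P a| := fun i j => by
      rw [abs_mul, abs_of_nonneg (hPs.1 i)]
      exact (mul_le_of_le_one_left (abs_nonneg _) (hPs.le_one i)).trans (ha j)
    have h2 : |g.adjugate k m| / (omega3 XP * omega3 XQ) ≤ 2 * |Q a - P a| := by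
      rw [← abs_of_pos (mul_pos hP0 hQ0), ← abs_div, e]
      refine (abs_sub _ _).trans ?_
      linarith [hb (m + 1) (m + 2), hb (m + 2) (m + 1)]
    have hPQ : omega3 XP * omega3 XQ ≤ 9 * N ^ 2 := by nlinarith
    have h3 : M / 9 / (9 * N ^ 2) ≤ |g.adjugate k m| / (omega3 XP * omega3 XQ) := by
      apply div_le_div₀ (abs_nonneg _) (by linarith) (mul_pos hP0 hQ0) hPQ
    have e3 : M / (162 * N ^ 2) = M / 9 / (9 * N ^ 2) / 2 := by field_simp; norm_num
    rw [e3]; linarith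
  have hdet : ∀ x, InSimplex x → ∀ b,
      |(proj (g *ᵥ x) a - P a) * (Q b - P b) - (proj (g *ᵥ x) b - P b) * (Q a - P a)| ≤
        729 / N ^ 3 := by
    intro x hx b
    have hX0 := hg.omega_pos hx
    have hX9 := hg.le_omega hx
    refine (minor_le_det (omega3_proj hX0) hPs.2 hQs.2 a b).trans ?_
    have e : ∑ n, proj (g *ᵥ x) n * (P (n + 1) * Q (n + 2) - P (n + 2) * Q (n + 1)) =
        x k / (omega3 (g *ᵥ x) * (omega3 XP * omega3 XQ)) := by
      have h1 : ∑ n, g.adjugate k n * (g *ᵥ x) n = x k := by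
        have : (g.adjugate *ᵥ (g *ᵥ x)) k = x k := by
          rw [Matrix.mulVec_mulVec, Matrix.adjugate_mul, hg.det_eq]; simp
        exact this
      rw [← h1, Finset.sum_div]
      refine Finset.sum_congr rfl fun n _ => ?_
      rw [hcross']
      simp only [proj, Pi.smul_apply, smul_eq_mul]
      field_simp
    rw [e, abs_of_nonneg (div_nonneg (hx.1 k) (by positivity))]
    have h3 : (N / 9) ^ 3 ≤ omega3 (g *ᵥ x) * (omega3 XP * omega3 XQ) := by
      have : (N / 9) ^ 3 = N / 9 * (N / 9 * (N / 9)) := by ring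
      rw [this]
      gcongr <;> linarith
    have e3 : 729 / N ^ 3 = 1 / (N / 9) ^ 3 := by field_simp; norm_num
    rw [e3]
    exact div_le_div₀ zero_le_one (hx.le_one k) (by positivity) h3
  refine ⟨a, fun x y hx hy b => ?_⟩
  have h1 := hdet x hx b
  have h2 := hdet y hy b
  set F := proj (g *ᵥ x)
  set G := proj (g *ᵥ y)
  have hva0 : 0 < |Q a - P a| := lt_of_lt_of_le (by positivity) hva
  refine le_of_mul_le_mul_right ?_ hva0
  have h3 : |(F b - G b) * (Q a - P a)| ≤ |(F a - G a) * (Q b - P b)| + 1458 / N ^ 3 := by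
    have e : (F b - G b) * (Q a - P a) = (F a - G a) * (Q b - P b) -
      (((F a - P a) * (Q b - P b) - (F b - P b) * (Q a - P a)) -
        ((G a - P a) * (Q b - P b) - (G b - P b) * (Q a - P a))) := by ring
    rw [e]
    have e2 : 1458 / N ^ 3 = 729 / N ^ 3 + 729 / N ^ 3 := by ring
    refine (abs_sub _ _).trans (add_le_add le_rfl ((abs_sub _ _).trans ?_))
    linarith
  rw [abs_mul, abs_mul] at h3
  have h4 : |F a - G a| * |Q b - P b| ≤ |F a - G a| * |Q a - P a| :=
    mul_le_mul_of_nonneg_left (ha b) (abs_nonneg _)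
  have h5 : 1458 / N ^ 3 ≤ 236196 * (1 / (M * N)) * |Q a - P a| := by
    calc 1458 / N ^ 3 = 236196 * (1 / (M * N)) * (M / (162 * N ^ 2)) := by
          field_simp; norm_num
      _ ≤ _ := by gcongr
  linarith

/-! ### Efficient covers of cylinders -/

theorem edist_le_of_coord {x y : E3} {c : ℝ} (h : ∀ i, |x i - y i| ≤ c) :
    edist x y ≤ ENNReal.ofReal (3 * c) := by
  rw [edist_dist, dist_eq_norm]
  apply ENNReal.ofReal_le_ofReal
  refine (norm_le_sum_abs _).trans ?_
  rw [Fin.sum_univ_three]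
  simp only [PiLp.sub_apply]
  linarith [h 0, h 1, h 2]

theorem fmap_coord (w : List (Fin 3)) (x : E3) (i : Fin 3) :
    fmap w x i = proj (Aw w *ᵥ ofE x) i := rfl

theorem phi_Aw (s : ℝ) (w : List (Fin 3)) :
    phi s (Aw w) = if s ≤ 1 then (sval1 (Aw w)⁻¹ / sval1 (Aw w) ^ 2) ^ s
      else sval1 (Aw w)⁻¹ / sval1 (Aw w) ^ 2 *
        (1 / (sval1 (Aw w)⁻¹ * sval1 (Aw w))) ^ (s - 1) := by
  have e1 : sval2 (Aw w) / sval1 (Aw w) = sval1 (Aw w)⁻¹ / sval1 (Aw w) ^ 2 := by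
    rw [sval2, Aw_det, abs_one, one_mul, div_div, sq]
  have e2 : sval3 (Aw w) / sval1 (Aw w) = 1 / (sval1 (Aw w)⁻¹ * sval1 (Aw w)) := by
    rw [sval3, one_div, mul_inv, div_eq_mul_inv]
  rw [phi, e1, e2]

theorem phi_Aw_nonneg (s : ℝ) (w : List (Fin 3)) : 0 ≤ phi s (Aw w) := by
  have h1 : 0 ≤ sval1 (Aw w) := norm_nonneg _
  have h2 : 0 ≤ sval1 (Aw w)⁻¹ := norm_nonneg _
  rw [phi_Aw]
  split_ifs <;> positivity

/-- `K` pieces of diameter at most `δ` cover the cylinder of `w`, with `K δ^s = O(φ_s(A_w))`. For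
`s ≤ 1` a single piece suffices; for `s > 1` the thin cylinder is cut into slices. -/
theorem exists_cover (s : ℝ) : ∃ C : ℝ, 0 ≤ C ∧ ∀ w, LastTwoDiff w →
    ∃ (K : ℕ) (t : Fin K → Set E3) (δ : ℝ), 0 ≤ δ ∧ fmap w '' simplex ⊆ ⋃ i, t i ∧
      (∀ i, Metric.ediam (t i) ≤ ENNReal.ofReal δ) ∧ K * δ ^ s ≤ C * phi s (Aw w) := by
  by_cases h1 : s ≤ 1
  · refine ⟨1458 ^ s, by positivity, fun w hw => ?_⟩
    have hg := goodMat_Aw hw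
    have hphi := phi_Aw s w
    have hN := hg.N_pos
    have hM := hg.M_pos
    set N := sval1 (Aw w)
    set M := sval1 (Aw w)⁻¹
    refine ⟨1, fun _ => fmap w '' simplex, 1458 * (M / N ^ 2), by positivity, ?_, ?_, ?_⟩
    · exact Set.subset_iUnion (fun _ : Fin 1 => fmap w '' simplex) 0
    · rintro -
      refine Metric.ediam_le ?_
      rintro _ ⟨x, hx, rfl⟩ _ ⟨y, hy, rfl⟩
      have e : 1458 * (M / N ^ 2) = 3 * (486 * (M / N ^ 2)) := by ring
      rw [e]
      exact edist_le_of_coord fun i => hg.proj_sub_le hx hy i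
    · rw [hphi, if_pos h1, Real.mul_rpow (by norm_num) (by positivity)]
      simp
  · push Not at h1
    refine ⟨990 * 708591 ^ s, by positivity, fun w hw => ?_⟩
    have hg := goodMat_Aw hw
    have hphi := phi_Aw s w
    have hN := hg.N_pos
    have hM := hg.M_pos
    set N := sval1 (Aw w)
    set M := sval1 (Aw w)⁻¹
    obtain ⟨a, ha⟩ := hg.thin
    set h := 1 / (M * N) with hh
    have hh0 : 0 < h := by positivity
    set D := 486 * (M / N ^ 2) with hD
    have hD0 : 0 < D := by positivity
    set p := proj (Aw w *ᵥ Pi.single 0 1) a - D with hp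
    -- slices of thickness `h` in the direction of the coordinate `a`
    refine ⟨⌊2 * D / h⌋₊ + 1, fun k => {z ∈ fmap w '' simplex | p + k * h ≤ z a ∧
      z a ≤ p + (k + 1) * h}, 708591 * h, by positivity, ?_, ?_, ?_⟩
    · rintro _ ⟨x, hx, rfl⟩
      have hx' := abs_le.1 (hg.proj_sub_le hx (inSimplex_single 0) a)
      have hz0 : 0 ≤ (fmap w x a - p) / h := by
        apply div_nonneg _ hh0.le
        rw [fmap_coord]; linarith
      have hz1 : (fmap w x a - p) / h ≤ 2 * D / h := by
        gcongr
        rw [fmap_coord]; linarith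
      refine Set.mem_iUnion.2 ⟨⟨⌊(fmap w x a - p) / h⌋₊,
        Nat.lt_succ_of_le (Nat.floor_le_floor hz1)⟩, ⟨x, hx, rfl⟩, ?_, ?_⟩
      · have := (le_div_iff₀ hh0).1 (Nat.floor_le hz0)
        simp only
        linarith
      · have := (div_lt_iff₀ hh0).1 (Nat.lt_floor_add_one ((fmap w x a - p) / h))
        simp only
        linarith
    · intro k
      refine Metric.ediam_le ?_
      rintro _ ⟨⟨x, hx, rfl⟩, hx1, hx2⟩ _ ⟨⟨y, hy, rfl⟩, hy1, hy2⟩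
      have e : 708591 * h = 3 * (h + 236196 * h) := by ring
      rw [e]
      refine edist_le_of_coord fun b => ?_
      have hab : |fmap w x a - fmap w y a| ≤ h := by
        rw [abs_le]; constructor <;> linarith
      refine (ha _ _ hx hy b).trans ?_
      exact add_le_add hab le_rfl
    · have hK : ((⌊2 * D / h⌋₊ + 1 : ℕ) : ℝ) ≤ 990 * (M ^ 2 / N) := by
        have e : 2 * D / h = 972 * (M ^ 2 / N) := by
          rw [hD, hh]; field_simp; norm_num
        have h18 : 1 ≤ 18 * (M ^ 2 / N) := by
          rw [← mul_div_assoc, le_div_iff₀ hN, one_mul]; exact hg.N_le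
        have := Nat.floor_le (a := 2 * D / h) (by positivity)
        push_cast
        linarith
      rw [hphi, if_neg (not_le.2 h1), Real.mul_rpow (by norm_num) hh0.le]
      have e2 : h ^ s = h * h ^ (s - 1) := by
        rw [Real.rpow_sub_one hh0.ne']; field_simp
      calc _ ≤ 990 * (M ^ 2 / N) * (708591 ^ s * h ^ s) := by gcongr
        _ = 990 * 708591 ^ s * ((M ^ 2 / N * h) * h ^ (s - 1)) := by rw [e2]; ring
        _ = _ := by
          congr 2
          rw [hh]; field_simp

/-! ### Coding of points of the gasket -/

theorem omega_Aw_pos (w : List (Fin 3)) {x : Fin 3 → ℝ} (hx : InSimplex x) :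
    0 < omega3 (Aw w *ᵥ x) := by
  rw [omega3_mulVec]
  obtain ⟨h, h1⟩ := hx
  have hc := (colSum_Aw w).1
  unfold omega3 at h1
  have a0 := mul_le_mul_of_nonneg_right (hc 0) (h 0)
  have a1 := mul_le_mul_of_nonneg_right (hc 1) (h 1)
  have a2 := mul_le_mul_of_nonneg_right (hc 2) (h 2)
  linarith

theorem proj_smul {c : ℝ} (hc : c ≠ 0) (X : Fin 3 → ℝ) : proj (c • X) = proj X := by
  rw [proj, proj, omega3_smul, smul_smul, mul_inv, mul_assoc, mul_comm _ c, ← mul_assoc,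
    inv_mul_cancel₀ hc, one_mul]

theorem fmap_append (u v : List (Fin 3)) {x : E3} (hx : x ∈ simplex) :
    fmap (u ++ v) x = fmap u (fmap v x) := by
  have h : proj (Aw (u ++ v) *ᵥ ofE x) = proj (Aw u *ᵥ proj (Aw v *ᵥ ofE x)) := by
    conv_rhs => rw [proj.eq_1 (Aw v *ᵥ ofE x)]
    rw [Matrix.mulVec_smul, proj_smul (inv_ne_zero (omega_Aw_pos v hx).ne'), Matrix.mulVec_mulVec,
      Aw_append]
  exact congrArg toE h

theorem fmap_mem_simplex (w : List (Fin 3)) {x : E3} (hx : x ∈ simplex) : fmap w x ∈ simplex := by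
  refine inSimplex_proj (fun i => ?_) (omega_Aw_pos w hx)
  rw [Matrix.mulVec, dotProduct]
  exact Finset.sum_nonneg fun j _ => mul_nonneg (Aw_nonneg w i j) (hx.1 j)

/-- Every word is a constant block appended to a word that is empty or ends in two distinct
letters. -/
theorem word_decomp (w : List (Fin 3)) :
    ∃ u b k, w = u ++ List.replicate k b ∧ (u = [] ∨ LastTwoDiff u) := by
  induction w with
  | nil => exact ⟨[], 0, 0, by simp, Or.inl rfl⟩
  | cons c v ih =>
    obtain ⟨u, b, k, rfl, hu | ⟨u', a, b', rfl, hab⟩⟩ := ih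
    · subst hu
      by_cases hcb : c = b
      · subst hcb
        exact ⟨[], c, k + 1, by simp [List.replicate_succ], Or.inl rfl⟩
      · cases k with
        | zero => exact ⟨[], c, 1, by simp, Or.inl rfl⟩
        | succ k =>
          exact ⟨[c, b], b, k, by simp [List.replicate_succ], Or.inr ⟨[], c, b, rfl, hcb⟩⟩
    · exact ⟨c :: (u' ++ [a, b']), b, k, by simp, Or.inr ⟨c :: u', a, b', by simp, hab⟩⟩

theorem Aw_replicate_mulVec (k : ℕ) (b : Fin 3) (y : Fin 3 → ℝ) :
    Aw (List.replicate k b) *ᵥ y = y + Pi.single b (k * (omega3 y - y b)) := by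
  induction k with
  | zero => simp [Aw]
  | succ k ih =>
    have : Aw (List.replicate (k + 1) b) = A b * Aw (List.replicate k b) := by
      simp [Aw, List.replicate_succ]
    rw [this, ← Matrix.mulVec_mulVec, ih]
    funext i
    fin_cases b <;> fin_cases i <;>
      simp [A, omega3, Matrix.mulVec, dotProduct, Fin.sum_univ_three] <;> ring

/-- The cylinders of the constant words `b^k` shrink to the vertex `e_b`. -/
theorem fmap_replicate_edist (k : ℕ) (b : Fin 3) {y : E3} (hy : y ∈ simplex) :
    edist (fmap (List.replicate k b) y) (toE (Pi.single b 1)) ≤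
      ENNReal.ofReal (3 * (1 / ((k : ℝ) + 1))) := by
  refine edist_le_of_coord fun i => ?_
  rw [fmap_coord, Aw_replicate_mulVec]
  obtain ⟨hy0, hy1⟩ := hy
  change |_ - (Pi.single b 1 : Fin 3 → ℝ) i| ≤ _
  set z := ofE y
  have hc0 : 0 ≤ 1 - z b := by linarith [InSimplex.le_one ⟨hy0, hy1⟩ b]
  have hc1 : 1 - z b ≤ 1 := by linarith [hy0 b]
  have hk : (0:ℝ) ≤ k := Nat.cast_nonneg k
  have hden : 0 < 1 + k * (1 - z b) := by positivity
  have hom : omega3 (z + Pi.single b (k * (omega3 z - z b))) = 1 + k * (1 - z b) := by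
    have : omega3 (z + Pi.single b (k * (omega3 z - z b))) = omega3 z + k * (omega3 z - z b) := by
      fin_cases b <;> simp [omega3] <;> ring
    rw [this, hy1]
  have hfrac : (1 - z b) / (1 + k * (1 - z b)) ≤ 1 / ((k : ℝ) + 1) := by
    rw [div_le_div_iff₀ hden (by positivity)]
    nlinarith
  rw [proj, hom, hy1]
  refine le_trans ?_ hfrac
  by_cases hib : i = b
  · subst hib
    have e : ((1 + k * (1 - z i))⁻¹ • (z + Pi.single i (k * (1 - z i))) : Fin 3 → ℝ) i -
        (Pi.single i 1 : Fin 3 → ℝ) i = -((1 - z i) / (1 + k * (1 - z i))) := by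
      simp
      field_simp
      ring
    rw [e, abs_neg, abs_of_nonneg (by positivity)]
  · have e : ((1 + k * (1 - z b))⁻¹ • (z + Pi.single b (k * (1 - z b))) : Fin 3 → ℝ) i -
        (Pi.single b 1 : Fin 3 → ℝ) i = z i / (1 + k * (1 - z b)) := by
      simp [hib]
      field_simp
    rw [e, abs_of_nonneg (div_nonneg (hy0 i) hden.le)]
    gcongr
    have h0 := hy0 0
    have h1 := hy0 1
    have h2 := hy0 2
    unfold omega3 at hy1
    fin_cases b <;> fin_cases i <;> simp at hib ⊢ <;> linarith

theorem continuousAt_fmap (u : List (Fin 3)) {x : E3} (hx : x ∈ simplex) :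
    ContinuousAt (fmap u) x := by
  have h1 : Continuous ofE := PiLp.continuous_ofLp 2 _
  have h2 : Continuous toE := PiLp.continuous_toLp 2 _
  have h3 : Continuous fun y => Aw u *ᵥ ofE y := Continuous.matrix_mulVec continuous_const h1
  have h4 : Continuous fun y => omega3 (Aw u *ᵥ ofE y) := by
    unfold omega3
    fun_prop
  exact h2.continuousAt.comp
    ((h4.continuousAt.inv₀ (omega_Aw_pos u hx).ne').smul h3.continuousAt)

/-- The countable set of points coded by eventually constant sequences. -/
def exceptional : Set E3 :=
  Set.range fun p : List (Fin 3) × Fin 3 => fmap p.1 (toE (Pi.single p.2 1))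

theorem eventually_notMem_cylinder {x : E3} (u : List (Fin 3)) (b : Fin 3)
    (hx : x ≠ fmap u (toE (Pi.single b 1))) :
    ∀ᶠ k : ℕ in Filter.atTop, x ∉ fmap (u ++ List.replicate k b) '' simplex := by
  have hb : toE (Pi.single b 1) ∈ simplex := inSimplex_single b
  have hne := (continuousAt_fmap u hb).eventually_ne hx.symm
  obtain ⟨ε, hε, hball⟩ := EMetric.mem_nhds_iff.1 hne
  have ht : Filter.Tendsto (fun k : ℕ => ENNReal.ofReal (3 * (1 / ((k : ℝ) + 1))))
      Filter.atTop (nhds 0) := by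
    have := (tendsto_one_div_add_atTop_nhds_zero_nat (𝕜 := ℝ)).const_mul 3
    simpa using ENNReal.tendsto_ofReal this
  filter_upwards [ht.eventually_lt_const hε] with k hk
  rintro ⟨y, hy, rfl⟩
  refine hball (a := fmap (List.replicate k b) y) ?_ (fmap_append u _ hy).symm
  exact lt_of_le_of_lt (fmap_replicate_edist k b hy) hk

/-- A non-exceptional point of the gasket lies in infinitely many cylinders of words whose last two
letters differ. -/
theorem infinite_cylinders {x : E3} (hx : x ∈ gasket) (hE : x ∉ exceptional) :
    {w | LastTwoDiff w ∧ x ∈ fmap w '' simplex}.Infinite := by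
  intro hfin
  have hE' : ∀ u b, x ≠ fmap u (toE (Pi.single b 1)) := fun u b h => hE ⟨(u, b), h.symm⟩
  set S : Set (List (Fin 3)) := insert [] {w | LastTwoDiff w ∧ x ∈ fmap w '' simplex}
  have hS : S.Finite := hfin.insert _
  have h1 : ∀ᶠ k : ℕ in Filter.atTop, ∀ u ∈ S, ∀ b,
      x ∉ fmap (u ++ List.replicate k b) '' simplex :=
    (Filter.eventually_all_finite hS).2 fun u _ => Filter.eventually_all.2 fun b =>
      eventually_notMem_cylinder u b (hE' u b)
  obtain ⟨k₀, hk₀⟩ := Filter.eventually_atTop.1 h1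
  obtain ⟨m, hm⟩ := (hS.image List.length).bddAbove
  have hxn := Set.mem_iInter.1 hx (k₀ + m)
  simp only [Set.mem_ofPred_eq, Set.mem_iUnion] at hxn
  obtain ⟨w, hw, hxw⟩ := hxn
  obtain ⟨u, b, k, rfl, hu⟩ := word_decomp w
  have huS : u ∈ S := by
    rcases hu with rfl | hu
    · exact Set.mem_insert _ _
    · refine Set.mem_insert_of_mem _ ⟨hu, ?_⟩
      obtain ⟨y, hy, rfl⟩ := hxw
      exact ⟨fmap (List.replicate k b) y, fmap_mem_simplex _ hy, (fmap_append u _ hy).symm⟩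
  have hlen : u.length ≤ m := hm ⟨u, huS, rfl⟩
  simp only [List.length_append, List.length_replicate] at hw
  exact hk₀ k (by omega) u huS b hxw

/-! ### Dimension bounds -/

theorem LastTwoDiff.ne_nil {w : List (Fin 3)} (hw : LastTwoDiff w) : w ≠ [] := by
  obtain ⟨u, a, b, rfl, -⟩ := hw
  simp

/-- The covers of the cylinders of words outside a finite set `F` have total `s`-weight bounded by a
tail of the convergent series, so the non-exceptional part of the gasket is `μH[s]`-null. -/
theorem dimH_gasket_le_of_summable {s : ℝ} (hs : 0 < s)
    (hsum : Summable fun w : {w : List (Fin 3) // w ≠ []} => phi s (Aw w.1)) :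
    dimH gasket ≤ ENNReal.ofReal s := by
  obtain ⟨C, hC, hcov⟩ := exists_cover s
  choose K t δ hδ htcov hdiam hK using fun w : {w // LastTwoDiff w} => hcov w.1 w.2
  set f : {w // LastTwoDiff w} → ENNReal := fun w => ENNReal.ofReal (C * phi s (Aw w.1)) with hf
  have hfsum : ∑' w, f w ≠ ⊤ := by
    have hinj : Function.Injective fun w : {w : List (Fin 3) // LastTwoDiff w} =>
        (⟨w.1, w.2.ne_nil⟩ : {w : List (Fin 3) // w ≠ []}) := fun w w' h =>
      Subtype.ext (Subtype.mk.inj h)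
    exact ((hsum.comp_injective hinj).mul_left C).tsum_ofReal_ne_top
  have htail := ENNReal.tendsto_tsum_compl_atTop_zero hfsum
  have hδf : ∀ w, (K w : ENNReal) * ENNReal.ofReal (δ w) ^ s ≤ f w := fun w => by
    rw [ENNReal.ofReal_rpow_of_nonneg (hδ w) hs.le, ← ENNReal.ofReal_natCast,
      ← ENNReal.ofReal_mul (Nat.cast_nonneg _)]
    exact ENNReal.ofReal_le_ofReal (hK w)
  have hmeas : μH[s] (gasket \ exceptional) = 0 := by
    have hr : Filter.Tendsto (fun F : Finset {w // LastTwoDiff w} =>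
        (∑' w : {w // w ∉ F}, f w) ^ (s⁻¹)) Filter.atTop (nhds 0) := by
      have := htail.ennrpow_const (s⁻¹)
      rwa [ENNReal.zero_rpow_of_pos (by positivity)] at this
    have hle := Measure.hausdorffMeasure_le_liminf_tsum
      (ι := fun F : Finset {w // LastTwoDiff w} => Σ w : {w // w ∉ F}, Fin (K w.1))
      s (gasket \ exceptional) _ hr (fun F i => t i.1.1 i.2) ?_ ?_
    · refine le_antisymm (hle.trans ?_) zero_le
      rw [← htail.liminf_eq]
      refine Filter.liminf_le_liminf (Filter.Eventually.of_forall fun F => ?_)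
      rw [ENNReal.tsum_sigma']
      refine ENNReal.tsum_le_tsum fun w => le_trans ?_ (hδf w.1)
      calc ∑' i : Fin (K w.1), Metric.ediam (t w.1 i) ^ s
          ≤ ∑' _ : Fin (K w.1), ENNReal.ofReal (δ w.1) ^ s :=
            ENNReal.tsum_le_tsum fun i => ENNReal.rpow_le_rpow (hdiam w.1 i) hs.le
        _ = _ := by simp
    · refine Filter.Eventually.of_forall fun F => ?_
      rintro ⟨w, i⟩
      refine (hdiam w.1 i).trans ?_
      rw [ENNReal.le_rpow_inv_iff hs]
      have hK1 : (1 : ENNReal) ≤ K w.1 := Nat.one_le_cast.2 i.pos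
      calc ENNReal.ofReal (δ w.1) ^ s ≤ K w.1 * ENNReal.ofReal (δ w.1) ^ s :=
            le_mul_of_one_le_left zero_le hK1
        _ ≤ f w.1 := hδf w.1
        _ ≤ _ := ENNReal.le_tsum (f := fun w : {w // w ∉ F} => f w.1) w
    · refine Filter.Eventually.of_forall fun F => ?_
      rintro x ⟨hx, hxE⟩
      obtain ⟨w, ⟨hwL, hxw⟩, hwF⟩ := (infinite_cylinders hx hxE).exists_notMem_finset
        (F.map (Function.Embedding.subtype _))
      have hwF' : (⟨w, hwL⟩ : {w // LastTwoDiff w}) ∉ F := fun h =>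
        hwF (Finset.mem_map.2 ⟨_, h, rfl⟩)
      obtain ⟨i, hi⟩ := Set.mem_iUnion.1 (htcov ⟨w, hwL⟩ hxw)
      exact Set.mem_iUnion.2 ⟨⟨⟨⟨w, hwL⟩, hwF'⟩, i⟩, hi⟩
  have hdim : dimH (gasket \ exceptional) ≤ ENNReal.ofReal s := by
    refine dimH_le_of_hausdorffMeasure_ne_top (d := s.toNNReal) ?_
    rw [Real.coe_toNNReal _ hs.le, hmeas]
    exact ENNReal.zero_ne_top
  have hE : dimH exceptional = 0 := dimH_countable (Set.countable_range _)
  calc dimH gasket ≤ dimH (gasket \ exceptional ∪ exceptional) :=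
        dimH_mono (by rw [Set.sdiff_union_self]; exact Set.subset_union_left)
    _ = max (dimH (gasket \ exceptional)) (dimH exceptional) := dimH_union _ _
    _ ≤ ENNReal.ofReal s := by rw [hE]; exact max_le hdim zero_le

/-- The gasket lies in the plane `ω = 1`. -/
theorem dimH_gasket_le_two : dimH gasket ≤ ENNReal.ofReal 2 := by
  let e : EuclideanSpace ℝ (Fin 2) → E3 := fun p => toE ![p 0, p 1, 1 - p 0 - p 1]
  have he : ContDiff ℝ 1 e := by
    rw [contDiff_piLp]
    intro i
    fin_cases i
    · change ContDiff ℝ 1 fun p : EuclideanSpace ℝ (Fin 2) => p 0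
      fun_prop
    · change ContDiff ℝ 1 fun p : EuclideanSpace ℝ (Fin 2) => p 1
      fun_prop
    · change ContDiff ℝ 1 fun p : EuclideanSpace ℝ (Fin 2) => 1 - p 0 - p 1
      fun_prop
  have hsub : gasket ⊆ Set.range e := by
    intro x hx
    have h0 := Set.mem_iInter.1 hx 0
    simp only [Set.mem_iUnion] at h0
    obtain ⟨w, -, y, hy, rfl⟩ := h0
    have hz := (fmap_mem_simplex w hy).2
    generalize fmap w y = z at hz
    refine ⟨WithLp.toLp 2 ![z 0, z 1], ?_⟩
    have hz' : z 0 + z 1 + z 2 = 1 := hz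
    ext i
    fin_cases i
    · rfl
    · rfl
    · change 1 - z 0 - z 1 = z 2
      linarith
  refine (dimH_mono hsub).trans (he.dimH_range_le.trans ?_)
  simp

/-- If the Falconer series at exponent `s ∈ (0,2]` converges then `dimH X ≤ s`;
in particular `dimH X ≤ s_A`. -/
theorem rauzy_dimH_upper_bound :
    (∀ s : ℝ, s ∈ Set.Ioc (0:ℝ) 2 →
        (Summable fun w : {w : List (Fin 3) // w ≠ []} => phi s (Aw w.1)) →
        dimH gasket ≤ ENNReal.ofReal s) ∧
    dimH gasket ≤ ENNReal.ofReal sA := by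
  have hmain : ∀ s : ℝ, s ∈ Set.Ioc (0:ℝ) 2 →
      (Summable fun w : {w : List (Fin 3) // w ≠ []} => phi s (Aw w.1)) →
      dimH gasket ≤ ENNReal.ofReal s := fun s hs => dimH_gasket_le_of_summable hs.1
  refine ⟨hmain, ?_⟩
  -- `sA = sSup ∅ = 0` if the series converges for every exponent
  have hsA0 : 0 ≤ sA := Real.sSup_nonneg fun s hs => hs.1.1.le
  rcases le_or_gt 2 sA with h2 | h2
  · exact dimH_gasket_le_two.trans (ENNReal.ofReal_le_ofReal h2)
  · have ht : Filter.Tendsto ENNReal.ofReal (nhdsWithin sA (Set.Ioi sA))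
        (nhds (ENNReal.ofReal sA)) :=
      (ENNReal.continuous_ofReal.tendsto sA).mono_left nhdsWithin_le_nhds
    refine ge_of_tendsto ht ?_
    filter_upwards [Ioo_mem_nhdsGT h2] with s hs
    have hs' : s ∈ Set.Ioc (0:ℝ) 2 := ⟨lt_of_le_of_lt hsA0 hs.1, hs.2.le⟩
    refine hmain s hs' ?_
    by_contra hns
    have : s ≤ sA := le_csSup ⟨2, fun r hr => hr.1.2⟩ ⟨hs', hns⟩
    exact absurd hs.1 (not_lt.2 this)
end

section
/- The Hausdorff dimension of the Rauzy gasket is at least 3/2: dimH X ≥ 3/2. -/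
/-!
The lower bound comes from self-similar measures carried by subsets of the gasket.

Products of the first two generators realize every matrix `B = (p q; r s)` of `SL₂(ℕ)` as their
upper left corner (`exists_word`). In the chart `(t, z)` given by the homogeneous vector
`(t - z, 1 - z, z)`, such a product preceded by the exchange of the letters `1` and `3` acts by an
explicit projective map `(Tc, Zc)`, called a block below. The exchange permutes the generators, so
infinite compositions of blocks still land in the gasket (`mem_gasket_of_coding`). For a large
parameter `m`, consider the at least `8 m²` blocks `Fam m` whose entries have order `m`. Each maps
the region `InQ` into a piece of length `O(1 / m²)` in the `t`-direction near `t = q / s`, and of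
height `O(1 / m)` in the `z`-direction.

Let `P` be the uniform Bernoulli measure on sequences of blocks, viewed on the limit set.

* A strip `|κ t - z - η| ≤ δ` with slope `κ ∈ [1/2, 3]` is transverse to the pieces. It meets
  `O(m)` of them (`card_strip_hits`), and its preimage under a block is contained in a strip with
  slope again in `[1/2, 3]` and of width `O(m δ)` (`pull_strip`). Iterating, the strip has mass
  `O(δ ^ (1 - ε))`, where `ε` is arbitrarily small when `m` is large (`Sys.strip`).
* If moreover `|t - θ| ≤ L` with `L < 1 / m²`, only `O(1)` pieces are met, because distinct slopes
  `q / s` are separated by a multiple of `1 / m²` (`card_box_hits`). The length of the box grows by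
  a factor `O(m²)` under pullback (`pull_t`). So one step multiplies the mass by `O(m⁻²)`, the width
  by `O(m)` and the length by `O(m²)`, and the box has mass `O(δ ^ (1 - ε) L ^ (1/2 - ε))`
  (`Sys.box`).

A ball of radius `r` lies in a box with `δ` and `L` of order `r`, hence has mass
`O(r ^ (3/2 - 2 ε))`. The mass distribution principle gives dimension at least `3/2 - 2 ε`, and
`ε` tends to `0`.
-/

open Matrix MeasureTheory

/-! ### Geometry of a single block -/

/-- The arithmetic data of a block: a matrix `(p q; r s)` of determinant one with `0 ≤ r ≤ s`,
entries of order `M`, and slope `q / s` in `[1/3, 1/2]`. -/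
structure Blk (M p q r s : ℝ) : Prop where
  hr : 0 ≤ r
  hrs : r ≤ s
  det : p * s - q * r = 1
  hs1 : 3 * M ≤ s
  hs2 : s ≤ 40 * M
  hq1 : s ≤ 3 * q
  hq2 : 2 * q ≤ s

/-- The region of the `(t, z)`-chart containing the limit set. -/
structure InQ (M t z : ℝ) : Prop where
  ht1 : 1 / 4 ≤ t
  ht2 : t ≤ 3 / 5
  hz1 : 0 ≤ z
  hz2 : 4 * M * z ≤ 1

/-- The common denominator of the two coordinates of a block map. -/
def Dn (r s t z : ℝ) : ℝ := r * t + s * (1 + t - 2 * z)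

/-- First coordinate of a block map. -/
noncomputable def Tc (p q r s t z : ℝ) : ℝ := (p * t + q * (1 + t - 2 * z)) / Dn r s t z

/-- Second coordinate of a block map. -/
noncomputable def Zc (r s t z : ℝ) : ℝ := (t - z) / Dn r s t z

lemma InQ.z_le {M t z : ℝ} (hM : 100000 ≤ M) (h : InQ M t z) : z ≤ 1 / 400000 := by
  nlinarith [h.hz2, h.hz1]

lemma Dn_bounds {M p q r s t z : ℝ} (hM : 100000 ≤ M) (hB : Blk M p q r s) (hQ : InQ M t z) :
    s ≤ Dn r s t z ∧ Dn r s t z ≤ 11 / 5 * s ∧ 300000 ≤ s := by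
  have hz := hQ.z_le hM
  have hs : 300000 ≤ s := by linarith [hB.hs1]
  have := hQ.ht1; have := hQ.ht2; have := hQ.hz1; have := hB.hr; have := hB.hrs
  unfold Dn
  refine ⟨?_, ?_, hs⟩
  · nlinarith [mul_nonneg hB.hr (by linarith : (0:ℝ) ≤ t),
      mul_nonneg (by linarith : (0:ℝ) ≤ s) (by linarith : (0:ℝ) ≤ t - 2 * z)]
  · nlinarith [mul_le_mul hB.hrs hQ.ht2 (by linarith) (by linarith),
      mul_nonneg (by linarith : (0:ℝ) ≤ s) (by linarith : (0:ℝ) ≤ 3 / 5 - t + 2 * z)]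

/-- The first coordinate of an image point exceeds the slope `q / s` of the block by `O(s⁻²)`. -/
lemma Tc_eq {M p q r s t z : ℝ} (hM : 100000 ≤ M) (hB : Blk M p q r s) (hQ : InQ M t z) :
    Tc p q r s t z = q / s + t / (s * Dn r s t z) := by
  obtain ⟨h1, h2, h3⟩ := Dn_bounds hM hB hQ
  have hD : 0 < Dn r s t z := by linarith
  have hs : 0 < s := by linarith
  unfold Tc
  rw [div_add_div _ _ hs.ne' (by positivity), div_eq_div_iff hD.ne' (by positivity)]
  have e : Dn r s t z = r * t + s * (1 + t - 2 * z) := rfl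
  generalize Dn r s t z = D at *
  have := hB.det
  have hp : p * s = 1 + q * r := by linarith
  have : s * (p * t + q * (1 + t - 2 * z)) = q * D + t := by
    rw [e]; linear_combination t * hp
  linear_combination (D * s) * this

lemma Tc_near {M p q r s t z : ℝ} (hM : 100000 ≤ M) (hB : Blk M p q r s) (hQ : InQ M t z) :
    q / s ≤ Tc p q r s t z ∧ Tc p q r s t z ≤ q / s + 1 / (15 * M ^ 2) := by
  obtain ⟨h1, h2, h3⟩ := Dn_bounds hM hB hQ
  rw [Tc_eq hM hB hQ]
  have hs : 0 < s := by linarith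
  have hD : 0 < Dn r s t z := by linarith
  have ht := hQ.ht1
  constructor
  · have : 0 ≤ t / (s * Dn r s t z) := by positivity
    linarith
  · apply add_le_add le_rfl
    rw [div_le_div_iff₀ (by positivity) (by positivity)]
    have a1 : 9 * M ^ 2 ≤ s * Dn r s t z := by nlinarith [hB.hs1]
    nlinarith [hQ.ht2, sq_nonneg M]

lemma block_mem {M p q r s t z : ℝ} (hM : 100000 ≤ M) (hB : Blk M p q r s) (hQ : InQ M t z) :
    InQ M (Tc p q r s t z) (Zc r s t z) := by
  obtain ⟨h1, h2, h3⟩ := Dn_bounds hM hB hQ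
  obtain ⟨n1, n2⟩ := Tc_near hM hB hQ
  have hz := hQ.z_le hM
  have hs : 0 < s := by linarith
  have hD : 0 < Dn r s t z := by linarith
  have q1 : 1 / 3 ≤ q / s := by
    rw [le_div_iff₀ hs]; linarith [hB.hq1]
  have q2 : q / s ≤ 1 / 2 := by
    rw [div_le_iff₀ hs]; linarith [hB.hq2]
  have hm : 1 / (15 * M ^ 2) ≤ 1 / 15 := by
    apply one_div_le_one_div_of_le (by norm_num); nlinarith
  refine ⟨by linarith, by linarith, ?_, ?_⟩
  · exact div_nonneg (by linarith [hQ.ht1]) hD.le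
  · unfold Zc
    rw [mul_div_assoc', div_le_one hD]
    nlinarith [hB.hs1, hQ.ht2, hQ.hz1]

lemma block_lip {M p q r s t z t' z' d : ℝ} (hM : 100000 ≤ M) (hB : Blk M p q r s)
    (hQ : InQ M t z) (hQ' : InQ M t' z') (h1 : |t - t'| ≤ d) (h2 : |z - z'| ≤ d) :
    |Tc p q r s t z - Tc p q r s t' z'| ≤ d / 2 ∧ |Zc r s t z - Zc r s t' z'| ≤ d / 2 := by
  obtain ⟨a1, a2, a3⟩ := Dn_bounds hM hB hQ
  obtain ⟨b1, b2, -⟩ := Dn_bounds hM hB hQ'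
  have hz := hQ.z_le hM
  have hz' := hQ'.z_le hM
  have hs : 0 < s := by linarith
  have eD : Dn r s t z = r * t + s * (1 + t - 2 * z) := rfl
  have eD' : Dn r s t' z' = r * t' + s * (1 + t' - 2 * z') := rfl
  have eT := Tc_eq hM hB hQ
  have eT' := Tc_eq hM hB hQ'
  have hr := hB.hr
  have hrs := hB.hrs
  have := hQ.ht1; have := hQ.ht2; have := hQ.hz1
  have := hQ'.ht1; have := hQ'.ht2; have := hQ'.hz1
  unfold Zc
  rw [eT, eT']
  generalize Dn r s t z = D at *
  generalize Dn r s t' z' = D' at *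
  have hD : 0 < D := by linarith
  have hD' : 0 < D' := by linarith
  have hd : 0 ≤ d := (abs_nonneg _).trans h1
  have hDD : s * s ≤ D * D' := mul_le_mul a1 b1 hs.le hD.le
  have hDd : |D' - D| ≤ 4 * s * d := by
    have : D' - D = (r + s) * (t' - t) - 2 * s * (z' - z) := by rw [eD, eD']; ring
    rw [this]
    rw [abs_sub_comm] at h1 h2
    calc _ ≤ |(r + s) * (t' - t)| + |2 * s * (z' - z)| := abs_sub _ _
      _ = (r + s) * |t' - t| + 2 * s * |z' - z| := by
        rw [abs_mul, abs_mul, abs_of_nonneg (by linarith : 0 ≤ r + s),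
          abs_of_nonneg (by linarith : 0 ≤ 2 * s)]
      _ ≤ (s + s) * d + 2 * s * d := by gcongr
      _ = _ := by ring
  have key : ∀ x x' : ℝ, 0 ≤ x' → x' ≤ 1 → |x - x'| ≤ 2 * d → |x / D - x' / D'| ≤ d / 2 := by
    intro x x' hx0 hx1 hx
    have : x / D - x' / D' = ((x - x') * D' + x' * (D' - D)) / (D * D') := by
      field_simp; ring
    rw [this, abs_div, abs_of_pos (mul_pos hD hD'), div_le_iff₀ (mul_pos hD hD')]
    calc _ ≤ |(x - x') * D'| + |x' * (D' - D)| := abs_add_le _ _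
      _ = |x - x'| * D' + x' * |D' - D| := by
        rw [abs_mul, abs_mul, abs_of_pos hD', abs_of_nonneg hx0]
      _ ≤ 2 * d * (11 / 5 * s) + 1 * (4 * s * d) := by gcongr
      _ ≤ d / 2 * (s * s) := by nlinarith [mul_nonneg hd hs.le]
      _ ≤ _ := by gcongr
  constructor
  · have : q / s + t / (s * D) - (q / s + t' / (s * D')) = (t / D - t' / D') / s := by
      field_simp; ring
    rw [this, abs_div, abs_of_pos hs, div_le_iff₀ hs]
    have := key t t' (by linarith) (by linarith) (by linarith)
    nlinarith
  · apply key _ _ (by linarith) (by linarith)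
    have : t - z - (t' - z') = (t - t') - (z - z') := by ring
    rw [this]
    exact (abs_sub _ _).trans (by linarith)

/-- A strip about a line of slope in `[1/2, 3]`, pulled back by a block map meeting it, lies in a
strip about a line of slope in `[1/2, 3]`, wider by a factor of order `M`. -/
lemma pull_strip {M p q r s κ η δ t z : ℝ} (hM : 100000 ≤ M) (hB : Blk M p q r s)
    (hκ1 : 1 / 2 ≤ κ) (hκ2 : κ ≤ 3) (hδ : 100000 * M * δ ≤ 1)
    (hQ : InQ M t z) (h : |κ * Tc p q r s t z - Zc r s t z - η| ≤ δ) :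
    ∃ κ' η', 1 / 2 ≤ κ' ∧ κ' ≤ 3 ∧ 0 ≤ η' ∧ ∀ t z, InQ M t z →
      |κ * Tc p q r s t z - Zc r s t z - η| ≤ δ → |κ' * t - z - η'| ≤ 1000 * M * δ := by
  have hdet := hB.det
  have hs : 0 < s := by linarith [hB.hs1]
  have hδ0 : 0 ≤ δ := (abs_nonneg _).trans h
  obtain ⟨e1, he1⟩ : ∃ e1, e1 = κ * p - η * r := ⟨_, rfl⟩
  obtain ⟨e2, he2⟩ : ∃ e2, e2 = κ * q - η * s := ⟨_, rfl⟩
  have hse : s * e1 = r * e2 + κ := by rw [he1, he2]; linear_combination κ * hdet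
  -- the pulled back functional, up to sign and cleared of denominators
  have hit : ∀ t z, InQ M t z → |κ * Tc p q r s t z - Zc r s t z - η| ≤ δ →
      |(1 - e1 - e2) * t - (1 - 2 * e2) * z - e2| ≤ δ * Dn r s t z := by
    intro t z hQ h
    obtain ⟨a1, a2, a3⟩ := Dn_bounds hM hB hQ
    have hD : 0 < Dn r s t z := by linarith
    have e : (1 - e1 - e2) * t - (1 - 2 * e2) * z - e2
        = -((κ * Tc p q r s t z - Zc r s t z - η) * Dn r s t z) := by
      have k1 : Tc p q r s t z * Dn r s t z = p * t + q * (1 + t - 2 * z) :=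
        div_mul_cancel₀ _ hD.ne'
      have k2 : Zc r s t z * Dn r s t z = t - z := div_mul_cancel₀ _ hD.ne'
      have k3 : Dn r s t z = r * t + s * (1 + t - 2 * z) := rfl
      rw [he1, he2]
      linear_combination κ * k1 - k2 - η * k3
    rw [e, abs_neg, abs_mul, abs_of_pos hD]
    gcongr
  have h0 := hit t z hQ h
  obtain ⟨a1, a2, a3⟩ := Dn_bounds hM hB hQ
  have hz := hQ.z_le hM
  have ht1 := hQ.ht1; have ht2 := hQ.ht2; have hz1 := hQ.hz1
  have hr := hB.hr; have hrs := hB.hrs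
  have eD : Dn r s t z = r * t + s * (1 + t - 2 * z) := rfl
  generalize Dn r s t z = D at *
  have hD : 0 < D := by linarith
  have hsz : s * z ≤ 10 := by nlinarith [hB.hs2, hQ.hz2]
  have hsz0 : 0 ≤ s * z := by positivity
  have hsδ : s * δ ≤ 1 / 2500 := by nlinarith [hB.hs2]
  -- since the strip meets the block, `e2` is close to `s t / D`, with error `E / D`
  obtain ⟨E, hE⟩ : ∃ E, E = e2 * D - s * t := ⟨_, rfl⟩
  have hEb : |E| ≤ D / 2000 := by
    have e : E = -(κ * t) - s * z - s * ((1 - e1 - e2) * t - (1 - 2 * e2) * z - e2) := by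
      rw [hE, eD]; linear_combination (-t) * hse
    rw [e]
    have k1 : |s * ((1 - e1 - e2) * t - (1 - 2 * e2) * z - e2)| ≤ 1 / 2500 * D := by
      rw [abs_mul, abs_of_pos hs]
      calc _ ≤ s * (δ * D) := by gcongr
        _ = s * δ * D := by ring
        _ ≤ _ := by gcongr
    have k2 : 0 ≤ κ * t := by positivity
    have k3 : κ * t ≤ 2 := by nlinarith
    rw [abs_le] at k1 ⊢
    constructor <;> linarith
  rw [abs_le] at hEb
  have hrt0 : 0 ≤ r * t := by positivity
  have hrt1 : r * t ≤ s * t := by gcongr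
  have hst1 : 1 / 4 * s ≤ s * t := by nlinarith
  have hst2 : s * t ≤ 3 / 5 * s := by nlinarith
  have f1 : (1 - 2 * e2) * D = r * t + s - s * t - 2 * (s * z) - 2 * E := by
    rw [hE]; linear_combination eD
  have f2 : s * ((1 - e1 - e2) * D)
      = s * s - 2 * s * (s * z) - (r + s) * E - κ * D := by
    rw [hE]; linear_combination (-D) * hse + s * eD
  have g0 : 0 ≤ e2 := by
    have : 0 ≤ e2 * D := by linarith
    exact nonneg_of_mul_nonneg_left this hD
  have g1 : 1 / 10 ≤ 1 - 2 * e2 := by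
    have : 1 / 10 * D ≤ (1 - 2 * e2) * D := by linarith
    exact le_of_mul_le_mul_right this hD
  have hrE : |(r + s) * E| ≤ 2 * s * (D / 2000) := by
    rw [abs_mul, abs_of_nonneg (by linarith : 0 ≤ r + s)]
    have : |E| ≤ D / 2000 := abs_le.2 hEb
    gcongr; linarith
  rw [abs_le] at hrE
  have hsD : s * D ≤ s * (11 / 5 * s) := by gcongr
  have hκD : κ * D ≤ 3 * (11 / 5 * s) := by gcongr
  have hκD0 : 0 ≤ κ * D := by positivity
  have hssz : s * (s * z) ≤ s * 10 := by gcongr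
  have hssz0 : 0 ≤ s * (s * z) := by positivity
  have hss : 300000 * s ≤ s * s := by gcongr
  have g2 : 99 / 100 * s ≤ (1 - e1 - e2) * D := by
    have : s * (99 / 100 * s) ≤ s * ((1 - e1 - e2) * D) := by rw [f2]; linarith
    exact le_of_mul_le_mul_left this hs
  have g3 : (1 - e1 - e2) * D ≤ 101 / 100 * s := by
    have : s * ((1 - e1 - e2) * D) ≤ s * (101 / 100 * s) := by rw [f2]; linarith
    exact le_of_mul_le_mul_left this hs
  have hpos : 0 < 1 - 2 * e2 := by linarith
  refine ⟨(1 - e1 - e2) / (1 - 2 * e2), e2 / (1 - 2 * e2), ?_, ?_, by positivity, ?_⟩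
  · rw [le_div_iff₀ hpos]
    refine le_of_mul_le_mul_right ?_ hD
    linarith
  · rw [div_le_iff₀ hpos]
    refine le_of_mul_le_mul_right ?_ hD
    linarith
  · intro t' z' hQ' h'
    have h1 := hit t' z' hQ' h'
    obtain ⟨b1, b2, -⟩ := Dn_bounds hM hB hQ'
    have e : (1 - e1 - e2) / (1 - 2 * e2) * t' - z' - e2 / (1 - 2 * e2)
        = ((1 - e1 - e2) * t' - (1 - 2 * e2) * z' - e2) / (1 - 2 * e2) := by
      have k1 := div_mul_cancel₀ (1 - e1 - e2) hpos.ne'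
      have k2 := div_mul_cancel₀ e2 hpos.ne'
      rw [eq_div_iff hpos.ne']
      linear_combination t' * k1 - k2
    rw [e, abs_div, abs_of_pos hpos, div_le_iff₀ hpos]
    calc _ ≤ δ * Dn r s t' z' := h1
      _ ≤ δ * (11 / 5 * (40 * M)) := by gcongr; linarith [hB.hs2]
      _ = 88 * (δ * M) := by ring
      _ ≤ 100 * (δ * M) := by gcongr; norm_num
      _ = 1000 * M * δ * (1 / 10) := by ring
      _ ≤ _ := by gcongr

/-- Inside a strip transverse to the blocks, the first coordinate of the image under a block map
determines the first coordinate of the point, at a cost of order `M ^ 2`. -/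
lemma pull_t {M p q r s κ η δ θ L t z t' z' : ℝ} (hM : 100000 ≤ M) (hB : Blk M p q r s)
    (hη : 0 ≤ η) (hδL : δ ≤ L)
    (hQ : InQ M t z) (hQ' : InQ M t' z')
    (h : |κ * t - z - η| ≤ 1000 * M * δ) (h' : |κ * t' - z' - η| ≤ 1000 * M * δ)
    (hT : |Tc p q r s t z - θ| ≤ L) (hT' : |Tc p q r s t' z' - θ| ≤ L) :
    |t - t'| ≤ 20000 * M ^ 2 * L := by
  obtain ⟨a1, a2, a3⟩ := Dn_bounds hM hB hQ
  obtain ⟨b1, b2, -⟩ := Dn_bounds hM hB hQ'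
  have hs : 0 < s := by linarith
  have eD : Dn r s t z = r * t + s * (1 + t - 2 * z) := rfl
  have eD' : Dn r s t' z' = r * t' + s * (1 + t' - 2 * z') := rfl
  rw [Tc_eq hM hB hQ] at hT
  rw [Tc_eq hM hB hQ'] at hT'
  generalize Dn r s t z = D at *
  generalize Dn r s t' z' = D' at *
  have hD : 0 < D := by linarith
  have hD' : 0 < D' := by linarith
  have := hQ.ht1; have := hQ.ht2; have := hQ'.ht1; have := hQ'.ht2
  have hL : 0 ≤ L := (abs_nonneg _).trans hT
  have hTT : |t / (s * D) - t' / (s * D')| ≤ 2 * L := by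
    rw [abs_le] at *
    constructor <;> linarith
  obtain ⟨ε, hε⟩ : ∃ ε, ε = κ * t - z - η := ⟨_, rfl⟩
  obtain ⟨ε', hε'⟩ : ∃ ε', ε' = κ * t' - z' - η := ⟨_, rfl⟩
  rw [← hε] at h
  rw [← hε'] at h'
  have e1 : (t / (s * D) - t' / (s * D')) * (D * D') = (t * D' - t' * D) / s := by
    field_simp
  have e2 : (t * D' - t' * D) / s = (1 + 2 * η) * (t - t') + 2 * (t * ε' - t' * ε) := by
    rw [div_eq_iff hs.ne', eD, eD', hε, hε']; ring
  have e3 : (1 + 2 * η) * (t - t')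
      = (t / (s * D) - t' / (s * D')) * (D * D') - 2 * (t * ε' - t' * ε) := by
    rw [e1, e2]; ring
  have hDM : D ≤ 88 * M := by linarith [hB.hs2]
  have hDM' : D' ≤ 88 * M := by linarith [hB.hs2]
  calc |t - t'| ≤ (1 + 2 * η) * |t - t'| := le_mul_of_one_le_left (abs_nonneg _) (by linarith)
    _ = |(1 + 2 * η) * (t - t')| := by rw [abs_mul, abs_of_nonneg (by linarith : 0 ≤ 1 + 2 * η)]
    _ ≤ |(t / (s * D) - t' / (s * D')) * (D * D')| + |2 * (t * ε' - t' * ε)| := by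
      rw [e3]; exact abs_sub _ _
    _ ≤ 2 * L * (88 * M * (88 * M)) + 2 * (3 / 5 * (1000 * M * δ) + 3 / 5 * (1000 * M * δ)) := by
      apply add_le_add
      · rw [abs_mul, abs_of_pos (mul_pos hD hD')]
        gcongr
      · rw [abs_mul, abs_of_pos (by norm_num : (0:ℝ) < 2)]
        gcongr
        refine (abs_sub _ _).trans ?_
        rw [abs_mul, abs_mul, abs_of_nonneg (by linarith : 0 ≤ t),
          abs_of_nonneg (by linarith : 0 ≤ t')]
        gcongr
    _ ≤ 2 * L * (88 * M * (88 * M)) + 2 * (3 / 5 * (1000 * M * L) + 3 / 5 * (1000 * M * L)) := by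
      gcongr
    _ ≤ _ := by
      have : 0 ≤ M * L := mul_nonneg (by linarith) hL
      nlinarith

/-! ### Self-similar measures -/

/-- Prepend a letter to an infinite word. -/
def scons {F : Type*} (x : F × (ℕ → F)) : ℕ → F := fun n => Nat.casesOn n x.1 x.2

lemma measurable_scons {F : Type*} [MeasurableSpace F] : Measurable (scons (F := F)) := by
  rw [measurable_pi_iff]
  rintro (_ | n)
  · exact measurable_fst
  · exact (measurable_pi_apply n).comp measurable_snd

/-- An i.i.d. sequence is an independent letter followed by an i.i.d. sequence. -/
lemma map_scons_infinitePi {F : Type*} [MeasurableSpace F] (μ : Measure F)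
    [IsProbabilityMeasure μ] :
    (μ.prod (Measure.infinitePi fun _ : ℕ => μ)).map scons = Measure.infinitePi fun _ : ℕ => μ := by
  classical
  apply Measure.eq_infinitePi
  intro s t ht
  obtain ⟨n, hn⟩ : ∃ n, s ⊆ Finset.range n := s.exists_nat_subset_range
  set u : ℕ → Set F := fun i => if i ∈ s then t i else Set.univ with hu
  have hum : ∀ i, MeasurableSet (u i) := by
    intro i; simp only [hu]; split_ifs
    · exact ht i
    · exact MeasurableSet.univ
  have e1 : Set.pi (s : Set ℕ) t = Set.pi (Finset.range (n + 1) : Set ℕ) u := by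
    ext x
    simp only [Set.mem_pi, Finset.mem_coe, hu]
    constructor
    · intro h i _
      split_ifs with hi
      · exact h i hi
      · trivial
    · intro h i hi
      have := h i (Finset.mem_range.2 (by have := Finset.mem_range.1 (hn hi); omega))
      simpa [hi] using this
  have e2 : ∏ i ∈ s, μ (t i) = ∏ i ∈ Finset.range (n + 1), μ (u i) := by
    have hsub : s ⊆ Finset.range (n + 1) := fun i hi =>
      Finset.mem_range.2 (by have := Finset.mem_range.1 (hn hi); omega)
    rw [← Finset.prod_subset hsub (f := fun i => μ (u i))]
    · exact Finset.prod_congr rfl fun i hi => by simp [hu, hi]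
    · intro i _ hi; simp [hu, hi]
  have e3 : scons ⁻¹' Set.pi (Finset.range (n + 1) : Set ℕ) u
      = u 0 ×ˢ Set.pi (Finset.range n : Set ℕ) (fun i => u (i + 1)) := by
    ext ⟨i, x⟩
    simp only [Set.mem_preimage, Set.mem_pi, Finset.coe_range, Set.mem_Iio, Set.mem_prod]
    constructor
    · intro h
      exact ⟨h 0 (by omega), fun j hj => h (j + 1) (by omega)⟩
    · rintro ⟨h0, h1⟩ (_ | j) hj
      · exact h0
      · exact h1 j (by omega)
  rw [e2, e1, Measure.map_apply measurable_scons
    (MeasurableSet.pi (Finset.countable_toSet _) fun i _ => hum i), e3, Measure.prod_prod,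
    Measure.infinitePi_pi _ fun i _ => hum _, Finset.prod_range_succ', mul_comm]

/-- The coding map of a finite family of uniformly contracting maps, obtained as a fixed point in
the space of continuous maps on infinite words. -/
lemma exists_coding {F K : Type*} [Finite F] [TopologicalSpace F] [DiscreteTopology F]
    [MetricSpace K] [CompleteSpace K] [Nonempty K] (G : F → K → K)
    (hG : ∀ i, LipschitzWith (1 / 2) (G i)) :
    ∃ π : (ℕ → F) → K, Continuous π ∧ ∀ ω, π ω = G (ω 0) (π fun n => ω (n + 1)) := by
  have hcont : Continuous fun x : F × K => G x.1 x.2 := by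
    rw [continuous_prod_of_discrete_left]
    exact fun i => (hG i).continuous
  let Φ : C(ℕ → F, K) → C(ℕ → F, K) := fun π =>
    ⟨fun ω => G (ω 0) (π fun n => ω (n + 1)), Continuous.comp hcont
      (f := fun ω : ℕ → F => (ω 0, π fun n => ω (n + 1))) (by fun_prop)⟩
  have hΦ : ContractingWith (1 / 2) Φ := by
    refine ⟨by rw [← NNReal.coe_lt_coe]; norm_num, LipschitzWith.of_dist_le_mul fun f g => ?_⟩
    rw [ContinuousMap.dist_le (by positivity)]
    intro ω
    refine ((hG (ω 0)).dist_le_mul _ _).trans ?_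
    gcongr
    exact ContinuousMap.dist_apply_le_dist _
  have : Nonempty C(ℕ → F, K) := ⟨ContinuousMap.const _ (Classical.arbitrary K)⟩
  obtain ⟨f, hf⟩ : ∃ f, Φ f = f := ⟨_, hΦ.fixedPoint_isFixedPt⟩
  exact ⟨f, f.continuous, fun ω => (DFunLike.congr_fun hf ω).symm⟩

/-- The uniform self-similar measure of a finite family of contractions, presented as the law of the
coding map `π` of a uniform random word. A set met by the images under the maps of `H` only, each
pullback having mass at most `c`, has mass at most `#H * c / card F`. -/
lemma exists_selfsimilar {F K : Type*} [Fintype F] [Nonempty F] [TopologicalSpace F]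
    [DiscreteTopology F] [MeasurableSpace F] [BorelSpace F]
    [MetricSpace K] [CompleteSpace K] [Nonempty K] [MeasurableSpace K] [BorelSpace K]
    (G : F → K → K) (hG : ∀ i, LipschitzWith (1 / 2) (G i)) :
    ∃ (P : Measure (ℕ → F)) (π : (ℕ → F) → K), IsProbabilityMeasure P ∧ Continuous π ∧
      Measurable π ∧ (∀ ω, π ω = G (ω 0) (π fun n => ω (n + 1))) ∧
      ∀ (S : Set K) (H : Finset F) (c : ℝ), MeasurableSet S →
        (∀ i, (∃ ω, G i (π ω) ∈ S) → i ∈ H) → (∀ i ∈ H, P.real {ω | G i (π ω) ∈ S} ≤ c) →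
        P.real {ω | π ω ∈ S} ≤ H.card * c / Fintype.card F := by
  classical
  obtain ⟨π, hπ, hfix⟩ := exists_coding G hG
  have hcard : (Fintype.card F : ENNReal) ≠ 0 := by simp
  let μ : Measure F := (Fintype.card F : ENNReal)⁻¹ • Measure.count
  have : IsProbabilityMeasure μ := ⟨by
    simp only [μ, Measure.smul_apply, smul_eq_mul, Measure.count_univ, ENat.card_eq_coe_fintype_card]
    exact ENNReal.inv_mul_cancel hcard (by simp)⟩
  let P : Measure (ℕ → F) := Measure.infinitePi fun _ : ℕ => μ
  have hπm : Measurable π := hπ.measurable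
  refine ⟨P, π, inferInstance, hπ, hπm, hfix, ?_⟩
  intro S H c hS hH hc
  have hself : P {ω | π ω ∈ S}
      = (Fintype.card F : ENNReal)⁻¹ * ∑ i, P {ω | G i (π ω) ∈ S} := by
    have hSm : MeasurableSet {ω | π ω ∈ S} := hπm hS
    conv_lhs => rw [show P = (μ.prod P).map scons from (map_scons_infinitePi μ).symm]
    rw [Measure.map_apply measurable_scons hSm, Measure.prod_apply (measurable_scons hSm)]
    simp only [μ, lintegral_smul_measure, smul_eq_mul, lintegral_count, tsum_fintype]
    congr 1
    refine Finset.sum_congr rfl fun i _ => ?_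
    congr 1
    ext ω
    simp only [Set.mem_preimage, Set.mem_ofPred_eq]
    rw [hfix (scons (i, ω))]
    rfl
  have hreal : P.real {ω | π ω ∈ S} = (∑ i, P.real {ω | G i (π ω) ∈ S}) / Fintype.card F := by
    rw [Measure.real, hself, ENNReal.toReal_mul, ENNReal.toReal_inv, ENNReal.toReal_natCast,
      ENNReal.toReal_sum (fun i _ => measure_ne_top P _), inv_mul_eq_div]
    rfl
  rw [hreal]
  gcongr
  calc ∑ i, P.real {ω | G i (π ω) ∈ S} = ∑ i ∈ H, P.real {ω | G i (π ω) ∈ S} := by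
        refine (Finset.sum_subset (Finset.subset_univ _) fun i _ hi => ?_).symm
        have : {ω | G i (π ω) ∈ S} = ∅ := by
          ext ω
          simp only [Set.mem_ofPred_eq, Set.mem_empty_iff_false, iff_false]
          exact fun h => hi (hH i ⟨ω, h⟩)
        rw [this]; simp
    _ ≤ ∑ i ∈ H, c := Finset.sum_le_sum hc
    _ = _ := by simp

/-! ### Blocks and the gasket -/

/-- Every matrix of `SL₂(ℕ)` occurs as the upper left corner of a product of the first two
generators, and it determines the rest of the product, because both generators fix the vector
`(-1, -1, 1)`. -/
lemma exists_word (p q r s : ℕ) (h : p * s = q * r + 1) :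
    ∃ w : List (Fin 3), Aw w = !![(p : ℝ), q, p + q - 1; r, s, r + s - 1; 0, 0, 1] := by
  induction hn : p + q + r + s using Nat.strong_induction_on generalizing p q r s with
  | _ n ih =>
    by_cases h1 : r ≤ p ∧ s ≤ q
    · obtain ⟨p', rfl⟩ := Nat.exists_eq_add_of_le h1.1
      obtain ⟨q', rfl⟩ := Nat.exists_eq_add_of_le h1.2
      have hpos : 0 < r + s := by
        rcases Nat.eq_zero_or_pos (r + s) with h0 | h0
        · have : r = 0 := by omega
          have : s = 0 := by omega
          subst_vars; simp at h
        · exact h0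
      obtain ⟨w, hw⟩ := ih (p' + q' + r + s) (by omega) p' q' r s (by nlinarith) rfl
      refine ⟨0 :: w, ?_⟩
      rw [Aw, List.map_cons, List.prod_cons, ← Aw, hw]
      ext i j
      fin_cases i <;> fin_cases j <;> simp [A, Matrix.mul_apply, Fin.sum_univ_three] <;> ring
    by_cases h2 : p ≤ r ∧ q ≤ s
    · obtain ⟨r', rfl⟩ := Nat.exists_eq_add_of_le h2.1
      obtain ⟨s', rfl⟩ := Nat.exists_eq_add_of_le h2.2
      have hpos : 0 < p + q := by
        rcases Nat.eq_zero_or_pos (p + q) with h0 | h0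
        · have : p = 0 := by omega
          have : q = 0 := by omega
          subst_vars; simp at h
        · exact h0
      obtain ⟨w, hw⟩ := ih (p + q + r' + s') (by omega) p q r' s' (by nlinarith) rfl
      refine ⟨1 :: w, ?_⟩
      rw [Aw, List.map_cons, List.prod_cons, ← Aw, hw]
      ext i j
      fin_cases i <;> fin_cases j <;> simp [A, Matrix.mul_apply, Fin.sum_univ_three] <;> ring
    have h3 : r < p ∧ q < s := by
      rcases Nat.lt_or_ge r p with hp | hp
      · exact ⟨hp, by omega⟩
      · exfalso
        have hp' : p < r := by omega
        have hq' : s < q := by omega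
        nlinarith
    obtain ⟨p', rfl⟩ := Nat.exists_eq_add_of_lt h3.1
    obtain ⟨s', rfl⟩ := Nat.exists_eq_add_of_lt h3.2
    have hq : q = 0 := by nlinarith
    have hr : r = 0 := by nlinarith
    have hp' : p' = 0 := by nlinarith
    have hs' : s' = 0 := by nlinarith
    subst_vars
    refine ⟨[], ?_⟩
    ext i j
    fin_cases i <;> fin_cases j <;> simp [Aw]

/-- The transposition of the first and third letters. -/
def tau : Fin 3 → Fin 3 := Equiv.swap 0 2

lemma Aw_tau (w : List (Fin 3)) (v : Fin 3 → ℝ) :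
    Aw (w.map tau) *ᵥ (v ∘ tau) = (Aw w *ᵥ v) ∘ tau := by
  have hA : ∀ (i : Fin 3) (v : Fin 3 → ℝ), A (tau i) *ᵥ (v ∘ tau) = (A i *ᵥ v) ∘ tau := by
    have t0 : tau 0 = 2 := by decide
    have t1 : tau 1 = 1 := by decide
    have t2 : tau 2 = 0 := by decide
    intro i v
    ext j
    fin_cases i <;> fin_cases j <;>
      simp [t0, t1, t2, A, Matrix.mulVec, dotProduct, Fin.sum_univ_three] <;> ring
  induction w with
  | nil => simp [Aw]
  | cons a w ih =>
    have e : ∀ (a : Fin 3) (w : List (Fin 3)), Aw (a :: w) = A a * Aw w := by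
      intro a w; simp [Aw]
    rw [List.map_cons, e, e, ← Matrix.mulVec_mulVec, ih, hA, Matrix.mulVec_mulVec]

/-- Nonnegative nonzero vectors. -/
def Pos (v : Fin 3 → ℝ) : Prop := (∀ i, 0 ≤ v i) ∧ 0 < omega3 v

lemma Pos.mulVec {v : Fin 3 → ℝ} (hv : Pos v) (w : List (Fin 3)) : Pos (Aw w *ᵥ v) := by
  induction w with
  | nil => simpa [Aw] using hv
  | cons a w ih =>
    have e : Aw (a :: w) = A a * Aw w := by simp [Aw]
    rw [e, ← Matrix.mulVec_mulVec]
    generalize Aw w *ᵥ v = u at ih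
    obtain ⟨h, h'⟩ := ih
    have h0 := h 0
    have h1 := h 1
    have h2 := h 2
    unfold omega3 at h'
    constructor
    · intro j
      fin_cases a <;> fin_cases j <;>
        simp [A, Matrix.mulVec, dotProduct, Fin.sum_univ_three] <;> linarith
    · unfold omega3
      fin_cases a <;>
        simp [A, Matrix.mulVec, dotProduct, Fin.sum_univ_three] <;> linarith

/-- Radial projection to the simplex. -/
noncomputable def nrm (v : Fin 3 → ℝ) : E3 := toE ((omega3 v)⁻¹ • v)

lemma nrm_mem {v y : Fin 3 → ℝ} {w : List (Fin 3)} (hy : Pos y) (h : v = Aw w *ᵥ y) :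
    nrm v ∈ fmap w '' simplex := by
  obtain ⟨h0, h1⟩ := hy
  have hsm : ∀ (c : ℝ) (u : Fin 3 → ℝ), omega3 (c • u) = c * omega3 u := by
    intro c u; simp [omega3]; ring
  have hof : ∀ u, ofE (toE u) = u := fun u => rfl
  refine ⟨toE ((omega3 y)⁻¹ • y), ⟨fun i => ?_, ?_⟩, ?_⟩
  · rw [hof]
    exact mul_nonneg (inv_nonneg.2 h1.le) (h0 i)
  · rw [hof, hsm, inv_mul_cancel₀ h1.ne']
  · unfold fmap nrm
    rw [hof, Matrix.mulVec_smul, ← h, hsm, smul_smul, mul_inv, inv_inv, mul_right_comm,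
      mul_inv_cancel₀ h1.ne', one_mul]

/-- The homogeneous vector of barycentric coordinates of the point with chart coordinates
`(t, z)`. -/
def bary (t z : ℝ) : Fin 3 → ℝ := ![t - z, 1 - z, z]

lemma bary_block {p q r s : ℕ} {w : List (Fin 3)}
    (hw : Aw w = !![(p : ℝ), q, p + q - 1; r, s, r + s - 1; 0, 0, 1]) {t z : ℝ}
    (hD : 0 < Dn r s t z) :
    bary (Tc p q r s t z) (Zc r s t z) = Aw w *ᵥ ((Dn r s t z)⁻¹ • (bary t z ∘ tau)) := by
  have t0 : tau 0 = 2 := by decide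
  have t1 : tau 1 = 1 := by decide
  have t2 : tau 2 = 0 := by decide
  have eD : Dn r s t z = r * t + s * (1 + t - 2 * z) := rfl
  rw [hw]
  unfold Tc Zc
  ext i
  fin_cases i <;>
    simp [t0, t1, t2, bary, Matrix.mulVec, dotProduct, Fin.sum_univ_three] <;>
    field_simp
  · ring
  · rw [eD]; ring

/-- A point whose orbit under inverse block maps never leaves the simplex is in the gasket. -/
lemma mem_gasket_of_coding {Ω : Type*} (t z : Ω → ℝ) (sh : Ω → Ω)
    (hpos : ∀ ω, Pos (bary (t ω) (z ω)))
    (h : ∀ ω, ∃ p q r s : ℕ, p * s = q * r + 1 ∧ 2 ≤ s ∧ 0 < Dn r s (t (sh ω)) (z (sh ω)) ∧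
      t ω = Tc p q r s (t (sh ω)) (z (sh ω)) ∧ z ω = Zc r s (t (sh ω)) (z (sh ω))) (ω : Ω) :
    nrm (bary (t ω) (z ω)) ∈ gasket := by
  have hpt : ∀ v, Pos v → Pos (v ∘ tau) := by
    rintro v ⟨h0, h1⟩
    refine ⟨fun i => h0 _, ?_⟩
    have t0 : tau 0 = 2 := by decide
    have t1 : tau 1 = 1 := by decide
    have t2 : tau 2 = 0 := by decide
    simp only [omega3, Function.comp_apply, t0, t1, t2] at *
    linarith
  have hps : ∀ (c : ℝ) v, 0 < c → Pos v → Pos (c • v) := by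
    rintro c v hc ⟨h0, h1⟩
    refine ⟨fun i => mul_nonneg hc.le (h0 i), ?_⟩
    have : omega3 (c • v) = c * omega3 v := by simp [omega3]; ring
    rw [this]; positivity
  have key : ∀ n : ℕ, ∀ ω, ∃ w : List (Fin 3), w.length = n ∧ ∃ y, Pos y ∧
      bary (t ω) (z ω) = Aw w *ᵥ y := by
    intro n
    induction n with
    | zero => exact fun ω => ⟨[], rfl, bary (t ω) (z ω), hpos ω, by simp [Aw]⟩
    | succ n ih =>
      intro ω
      obtain ⟨w, hwn, y, hy, hwy⟩ := ih (sh ω)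
      obtain ⟨p, q, r, s, hdet, hs, hD, ht, hz⟩ := h ω
      obtain ⟨v, hv⟩ := exists_word p q r s hdet
      have hvne : 1 ≤ v.length := by
        rcases v with _ | ⟨a, v⟩
        · have := congrFun (congrFun hv 1) 1
          simp [Aw] at this
          have : s = 1 := by exact_mod_cast this.symm
          omega
        · simp
      obtain ⟨c, hc, e⟩ : ∃ c : ℝ, 0 < c ∧
          bary (t ω) (z ω) = Aw (v ++ w.map tau) *ᵥ (c • (y ∘ tau)) := by
        refine ⟨(Dn r s (t (sh ω)) (z (sh ω)))⁻¹, inv_pos.2 hD, ?_⟩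
        rw [ht, hz, bary_block hv hD, hwy, ← Aw_tau, Aw, Aw, Aw, List.map_append, List.prod_append,
          ← Matrix.mulVec_mulVec, Matrix.mulVec_smul, Matrix.mulVec_smul, Matrix.mulVec_smul]
      rw [← List.take_append_drop (n + 1) (v ++ w.map tau), Aw, List.map_append, List.prod_append,
        ← Matrix.mulVec_mulVec] at e
      refine ⟨_, ?_, _, (hps c _ hc (hpt y hy)).mulVec _, e⟩
      rw [List.length_take, List.length_append, List.length_map]
      omega
  refine Set.mem_iInter.2 fun n => ?_
  obtain ⟨w, hw, y, hy, e⟩ := key (n + 1) ω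
  exact Set.mem_biUnion (show w ∈ {w : List (Fin 3) | w.length = n + 1} from hw) (nrm_mem hy e)

/-! ### Counting blocks -/

/-- Index set of the blocks of size `m`: the pair `(a, b)` stands for the block with second column
`(q, s) = (a + b, 2 * a + 3 * b)`. -/
def Fam (m : ℕ) : Finset (ℕ × ℕ) :=
  ((Finset.Ioc 0 (8 * m)) ×ˢ (Finset.Ioc 0 (8 * m))).filter fun x => m < x.2 ∧ Nat.Coprime x.1 x.2

lemma sum_inv_sq_le (n : ℕ) (hn : 2 ≤ n) :
    ∑ d ∈ Finset.Icc 2 n, (1 : ℝ) / (d : ℝ) ^ 2 ≤ 3 / 4 - 1 / n := by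
  induction n, hn using Nat.le_induction with
  | base => norm_num
  | succ n hn ih =>
    rw [← Finset.insert_Icc_right_eq_Icc_add_one (by omega), Finset.sum_insert (by simp)]
    have hn' : (0 : ℝ) < n := by positivity
    have : (1 : ℝ) / ((n + 1 : ℕ) : ℝ) ^ 2 ≤ 1 / n - 1 / ((n + 1 : ℕ) : ℝ) := by
      push_cast
      rw [div_sub_div _ _ (by positivity) (by positivity),
        div_le_div_iff₀ (by positivity) (by positivity)]
      nlinarith
    linarith

/-- A union bound over the common divisors `d ≥ 2`: the excluded pairs fill at most
`1/8 + 3/4` of the square. -/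
lemma card_Fam (m : ℕ) (hm : 1 ≤ m) : 8 * (m : ℝ) ^ 2 ≤ (Fam m).card := by
  classical
  set n := 8 * m with hn
  set I := Finset.Ioc 0 n with hI
  have hcover : I ×ˢ I ⊆ Fam m ∪ (I ×ˢ Finset.Ioc 0 m ∪ (Finset.Icc 2 n).biUnion fun d =>
      (I.filter (d ∣ ·)) ×ˢ (I.filter (d ∣ ·))) := by
    rintro ⟨a, b⟩ hab
    rw [Finset.mem_product] at hab
    simp only [Finset.mem_union, Finset.mem_product, Finset.mem_biUnion, Finset.mem_filter]
    obtain ⟨ha, hb⟩ := hab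
    have ha' := Finset.mem_Ioc.1 ha
    have hb' := Finset.mem_Ioc.1 hb
    by_cases h1 : b ≤ m
    · exact Or.inr (Or.inl ⟨ha, Finset.mem_Ioc.2 ⟨hb'.1, h1⟩⟩)
    by_cases h2 : Nat.Coprime a b
    · left
      simp only [Fam, Finset.mem_filter, Finset.mem_product]
      exact ⟨⟨ha, hb⟩, by omega, h2⟩
    · right; right
      have hg : 0 < Nat.gcd a b := Nat.gcd_pos_of_pos_left _ ha'.1
      have hle : Nat.gcd a b ≤ a := Nat.gcd_le_left _ ha'.1
      refine ⟨Nat.gcd a b, Finset.mem_Icc.2 ⟨?_, by omega⟩, ⟨ha, Nat.gcd_dvd_left _ _⟩,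
        ⟨hb, Nat.gcd_dvd_right _ _⟩⟩
      have : Nat.gcd a b ≠ 1 := h2
      omega
  have h1 := Finset.card_le_card hcover
  have h2 := h1.trans ((Finset.card_union_le _ _).trans (Nat.add_le_add_left
    (Finset.card_union_le _ _) _))
  have h3 : ((Finset.Icc 2 n).biUnion fun d =>
      (I.filter (d ∣ ·)) ×ˢ (I.filter (d ∣ ·))).card ≤ ∑ d ∈ Finset.Icc 2 n, (n / d) * (n / d) := by
    refine Finset.card_biUnion_le.trans (le_of_eq ?_)
    refine Finset.sum_congr rfl fun d _ => ?_
    rw [Finset.card_product, hI, Nat.Ioc_filter_dvd_card_eq_div]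
  have h4 : ((∑ d ∈ Finset.Icc 2 n, (n / d) * (n / d) : ℕ) : ℝ) ≤ 3 / 4 * (n : ℝ) ^ 2 := by
    push_cast
    calc ∑ d ∈ Finset.Icc 2 n, (((n / d : ℕ) : ℝ) * ((n / d : ℕ) : ℝ))
        ≤ ∑ d ∈ Finset.Icc 2 n, (n : ℝ) ^ 2 * (1 / (d : ℝ) ^ 2) := by
          refine Finset.sum_le_sum fun d _ => ?_
          have : ((n / d : ℕ) : ℝ) ≤ n / d := Nat.cast_div_le
          calc _ ≤ (n / d : ℝ) * (n / d) := by gcongr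
            _ = _ := by ring
      _ = (n : ℝ) ^ 2 * ∑ d ∈ Finset.Icc 2 n, (1 / (d : ℝ) ^ 2) := by rw [Finset.mul_sum]
      _ ≤ (n : ℝ) ^ 2 * (3 / 4) := by
          gcongr
          refine (sum_inv_sq_le n (by omega)).trans ?_
          have : (0 : ℝ) ≤ 1 / n := by positivity
          linarith
      _ = _ := by ring
  have h5 : (n * n : ℝ) ≤ (Fam m).card + (n * m + ∑ d ∈ Finset.Icc 2 n, (n / d) * (n / d) : ℕ) := by
    have : n * n ≤ (Fam m).card + (n * m + ∑ d ∈ Finset.Icc 2 n, (n / d) * (n / d)) := by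
      simp only [Finset.card_product, hI, Nat.card_Ioc, Nat.sub_zero] at h2 h3 ⊢
      omega
    exact_mod_cast this
  rw [Nat.cast_add] at h5
  have h6 : (n : ℝ) = 8 * m := by rw [hn]; push_cast; ring
  push_cast [h6] at h4 h5
  linarith

/-- Completion of a column of coprime entries to a block. -/
lemma exists_block {m : ℕ} (x : ℕ × ℕ) (hx : x ∈ Fam m) :
    ∃ p r : ℕ, p * (2 * x.1 + 3 * x.2) = (x.1 + x.2) * r + 1 ∧
      Blk m p ((x.1 + x.2 : ℕ) : ℝ) r ((2 * x.1 + 3 * x.2 : ℕ) : ℝ) := by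
  obtain ⟨a, b⟩ := x
  simp only [Fam, Finset.mem_filter, Finset.mem_product, Finset.mem_Ioc] at hx ⊢
  obtain ⟨⟨⟨ha, ha'⟩, hb, hb'⟩, hmb, hc⟩ := hx
  have hc' : Nat.Coprime (2 * a + 3 * b) (a + b) := by
    have e : 2 * a + 3 * b = b + 2 * (a + b) := by ring
    rw [e, Nat.coprime_add_mul_right_left]
    rw [Nat.coprime_add_self_right]
    exact hc.symm
  obtain ⟨p, hp, hmod⟩ := Nat.exists_mul_mod_eq_one_of_coprime hc' (by omega)
  have hdet : p * (2 * a + 3 * b) = (a + b) * ((2 * a + 3 * b) * p / (a + b)) + 1 := by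
    have := Nat.div_add_mod ((2 * a + 3 * b) * p) (a + b)
    rw [hmod] at this
    rw [this]; ring
  refine ⟨p, (2 * a + 3 * b) * p / (a + b), hdet, ?_⟩
  generalize (2 * a + 3 * b) * p / (a + b) = r at hdet
  have hrs : r ≤ 2 * a + 3 * b := by
    by_contra hcon
    have : (a + b) * (2 * a + 3 * b) ≤ (a + b) * r := Nat.mul_le_mul_left _ (by omega)
    have : p * (2 * a + 3 * b) ≤ (a + b) * (2 * a + 3 * b) := Nat.mul_le_mul_right _ hp.le
    omega
  refine ⟨by positivity, by exact_mod_cast hrs, ?_, ?_, ?_, ?_, ?_⟩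
  · have : ((p * (2 * a + 3 * b) : ℕ) : ℝ) = (((a + b) * r + 1 : ℕ) : ℝ) := by rw [hdet]
    push_cast at this ⊢
    linarith
  · exact_mod_cast (by omega : 3 * m ≤ 2 * a + 3 * b)
  · exact_mod_cast (by omega : 2 * a + 3 * b ≤ 40 * m)
  · exact_mod_cast (by omega : 2 * a + 3 * b ≤ 3 * (a + b))
  · exact_mod_cast (by omega : 2 * (a + b) ≤ 2 * a + 3 * b)

/-- Integers labelling `S` injectively from a real interval bound the size of `S`. -/
lemma card_le_of_interval {α : Type*} (S : Finset α) (f : α → ℤ) (hf : Set.InjOn f S) (x y : ℝ)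
    (n : ℕ) (h : ∀ a ∈ S, x ≤ f a ∧ (f a : ℝ) ≤ y) (hn : y - x + 1 ≤ n) : S.card ≤ n := by
  have h1 : S.card ≤ (Finset.Icc ⌈x⌉ ⌊y⌋).card :=
    Finset.card_le_card_of_injOn f (fun a ha => by
      rw [Finset.mem_coe, Finset.mem_Icc]
      exact ⟨Int.ceil_le.2 (h a ha).1, Int.le_floor.2 (h a ha).2⟩) hf
  rw [Int.card_Icc] at h1
  refine h1.trans (Int.toNat_le.2 ?_)
  have h2 := Int.floor_le y
  have h3 := Int.le_ceil x
  have : ((⌊y⌋ + 1 - ⌈x⌉ : ℤ) : ℝ) ≤ ((n : ℤ) : ℝ) := by push_cast; linarith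
  exact_mod_cast this

/-- For each value of `s ≤ 40 m`, the blocks in `H` have at most `161` values of `q`, and `(q, s)`
determines the block. -/
lemma card_strip_hits {m : ℕ} (θ : ℝ) (H : Finset {x // x ∈ Fam m})
    (hH : ∀ x ∈ H, |((x.1.1 + x.1.2 : ℕ) : ℝ) - θ * ((2 * x.1.1 + 3 * x.1.2 : ℕ) : ℝ)| ≤ 80) :
    H.card ≤ 6440 * m := by
  classical
  have hmem : ∀ x : {x // x ∈ Fam m}, (0 < x.1.1 ∧ x.1.1 ≤ 8 * m) ∧ 0 < x.1.2 ∧ x.1.2 ≤ 8 * m := by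
    intro x
    have := x.2
    simp only [Fam, Finset.mem_filter, Finset.mem_product, Finset.mem_Ioc] at this
    exact this.1
  have key := Finset.card_le_mul_card_image_of_maps_to (s := H) (t := Finset.Ioc 0 (40 * m))
    (f := fun x => 2 * x.1.1 + 3 * x.1.2) (fun x _ => by
      have := hmem x
      rw [Finset.mem_Ioc]; omega) 161 (fun s _ => by
      refine card_le_of_interval _ (fun x => ((x.1.1 + x.1.2 : ℕ) : ℤ)) ?_ (θ * s - 80)
        (θ * s + 80) 161 ?_ (by norm_num)
      · intro x hx y hy hxy
        simp only [Finset.coe_filter, Set.mem_ofPred_eq] at hx hy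
        have h1 : x.1.1 + x.1.2 = y.1.1 + y.1.2 := by
          have h0 : ((x.1.1 + x.1.2 : ℕ) : ℤ) = ((y.1.1 + y.1.2 : ℕ) : ℤ) := hxy
          exact_mod_cast h0
        have h2 := hx.2
        have h3 := hy.2
        apply Subtype.ext
        apply Prod.ext <;> omega
      · intro x hx
        rw [Finset.mem_filter] at hx
        have h1 := hH x hx.1
        rw [hx.2, abs_le] at h1
        constructor <;> push_cast at h1 ⊢ <;> linarith)
  rw [Nat.card_Ioc] at key
  omega

/-- Distinct slopes are `1 / (1600 m²)`-separated. -/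
lemma card_box_hits {m : ℕ} (hm : 1 ≤ m) (θ : ℝ) (H : Finset {x // x ∈ Fam m})
    (hH : ∀ x ∈ H, |((x.1.1 + x.1.2 : ℕ) : ℝ) / ((2 * x.1.1 + 3 * x.1.2 : ℕ) : ℝ) - θ|
      ≤ 2 / (m : ℝ) ^ 2) :
    H.card ≤ 6402 := by
  have hm' : (0 : ℝ) < m := by exact_mod_cast hm
  set sl : {x // x ∈ Fam m} → ℝ := fun x =>
    ((x.1.1 + x.1.2 : ℕ) : ℝ) / ((2 * x.1.1 + 3 * x.1.2 : ℕ) : ℝ) with hsl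
  refine card_le_of_interval H (fun x => ⌊1600 * (m : ℝ) ^ 2 * sl x⌋) ?_
    (1600 * (m : ℝ) ^ 2 * θ - 3200 - 1) (1600 * (m : ℝ) ^ 2 * θ + 3200) 6402 ?_ (by norm_num; linarith)
  · intro x _ y _ hxy
    obtain ⟨⟨a, b⟩, hx⟩ := x
    obtain ⟨⟨c, d⟩, hy⟩ := y
    have hab := Int.abs_sub_lt_one_of_floor_eq_floor hxy
    simp only [hsl] at hab
    simp only [Fam, Finset.mem_filter, Finset.mem_product, Finset.mem_Ioc] at hx hy
    have hs : (0 : ℝ) < ((2 * a + 3 * b : ℕ) : ℝ) := by exact_mod_cast (by omega)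
    have hs' : (0 : ℝ) < ((2 * c + 3 * d : ℕ) : ℝ) := by exact_mod_cast (by omega)
    have hs2 : ((2 * a + 3 * b : ℕ) : ℝ) ≤ 40 * m := by
      exact_mod_cast (by omega : 2 * a + 3 * b ≤ 40 * m)
    have hs2' : ((2 * c + 3 * d : ℕ) : ℝ) ≤ 40 * m := by
      exact_mod_cast (by omega : 2 * c + 3 * d ≤ 40 * m)
    -- the cross determinant is an integer of absolute value less than one
    have hz : ((a : ℤ) * d - b * c) = 0 := by
      rw [← mul_sub, abs_mul, abs_of_pos (by positivity), div_sub_div _ _ hs.ne' hs'.ne', abs_div,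
        abs_of_pos (mul_pos hs hs'), mul_div_assoc', div_lt_one (mul_pos hs hs')] at hab
      have h1 : 1600 * (m : ℝ) ^ 2 * |(((a + b : ℕ) : ℝ) * ((2 * c + 3 * d : ℕ) : ℝ)
          - ((2 * a + 3 * b : ℕ) : ℝ) * ((c + d : ℕ) : ℝ))| < 1600 * (m : ℝ) ^ 2 * 1 := by
        refine hab.trans_le ?_
        calc _ ≤ (40 * m : ℝ) * (40 * m) := by gcongr
          _ = _ := by ring
      have h2 := lt_of_mul_lt_mul_left h1 (by positivity)
      have h3 : (((a + b : ℕ) : ℝ) * ((2 * c + 3 * d : ℕ) : ℝ)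
          - ((2 * a + 3 * b : ℕ) : ℝ) * ((c + d : ℕ) : ℝ)) = (((a : ℤ) * d - b * c : ℤ) : ℝ) := by
        push_cast; ring
      rw [h3, ← Int.cast_abs] at h2
      have h4 : |(a : ℤ) * d - b * c| < 1 := by exact_mod_cast h2
      exact Int.abs_lt_one_iff.1 h4
    have hN : a * d = b * c := by
      have : (a : ℤ) * d = b * c := by linarith
      exact_mod_cast this
    have e1 : a ∣ c := (hx.2.2.dvd_of_dvd_mul_left (hN ▸ Dvd.intro _ rfl))
    have e2 : c ∣ a := hy.2.2.dvd_of_dvd_mul_right (hN ▸ Dvd.intro_left _ rfl)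
    have e3 : a = c := Nat.dvd_antisymm e1 e2
    subst e3
    have e4 : d = b := by
      rw [mul_comm b a] at hN
      exact Nat.eq_of_mul_eq_mul_left hx.1.1.1 hN
    subst e4
    rfl
  · intro x hx
    have h1 := hH x hx
    rw [abs_le] at h1
    have hf1 := Int.floor_le (1600 * (m : ℝ) ^ 2 * sl x)
    have hf2 := Int.lt_floor_add_one (1600 * (m : ℝ) ^ 2 * sl x)
    have e : 1600 * (m : ℝ) ^ 2 * (2 / (m : ℝ) ^ 2) = 3200 := by field_simp; norm_num
    have g1 : 1600 * (m : ℝ) ^ 2 * (-(2 / (m : ℝ) ^ 2)) ≤ 1600 * (m : ℝ) ^ 2 * (sl x - θ) := by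
      gcongr; exact h1.1
    have g2 : 1600 * (m : ℝ) ^ 2 * (sl x - θ) ≤ 1600 * (m : ℝ) ^ 2 * (2 / (m : ℝ) ^ 2) := by
      gcongr; exact h1.2
    constructor <;> linarith

/-! ### Mass of strips and boxes -/

/-- The upper right entry of the block indexed by `i`. -/
def qF {m : ℕ} (i : {x // x ∈ Fam m}) : ℕ := i.1.1 + i.1.2

/-- The lower right entry of the block indexed by `i`. -/
def sF {m : ℕ} (i : {x // x ∈ Fam m}) : ℕ := 2 * i.1.1 + 3 * i.1.2

/-- The self-similar system generated by the blocks of size `m`: the left columns `(p, r)` of the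
blocks, the coding `ω ↦ (t ω, z ω)` of the limit set, and the uniform Bernoulli measure `P`, which
enters only through the self-similarity inequality `self`. -/
structure Sys (m : ℕ) where
  p : {x // x ∈ Fam m} → ℕ
  r : {x // x ∈ Fam m} → ℕ
  det : ∀ i, p i * sF i = qF i * r i + 1
  blk : ∀ i, Blk m (p i) (qF i) (r i) (sF i)
  t : (ℕ → {x // x ∈ Fam m}) → ℝ
  z : (ℕ → {x // x ∈ Fam m}) → ℝ
  ht : Measurable t
  hz : Measurable z
  inQ : ∀ ω, InQ m (t ω) (z ω)
  t_eq : ∀ ω, t ω = Tc (p (ω 0)) (qF (ω 0)) (r (ω 0)) (sF (ω 0))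
    (t fun n => ω (n + 1)) (z fun n => ω (n + 1))
  z_eq : ∀ ω, z ω = Zc (r (ω 0)) (sF (ω 0)) (t fun n => ω (n + 1)) (z fun n => ω (n + 1))
  P : Measure (ℕ → {x // x ∈ Fam m})
  prob : IsProbabilityMeasure P
  self : ∀ (S : Set (ℝ × ℝ)) (H : Finset {x // x ∈ Fam m}) (c : ℝ), MeasurableSet S →
    (∀ i, (∃ ω, (Tc (p i) (qF i) (r i) (sF i) (t ω) (z ω), Zc (r i) (sF i) (t ω) (z ω)) ∈ S) →
      i ∈ H) →
    (∀ i ∈ H, P.real {ω | (Tc (p i) (qF i) (r i) (sF i) (t ω) (z ω),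
      Zc (r i) (sF i) (t ω) (z ω)) ∈ S} ≤ c) →
    P.real {ω | (t ω, z ω) ∈ S} ≤ H.card * c / Fintype.card {x // x ∈ Fam m}

lemma exists_sys {m : ℕ} (hm : 100000 ≤ m) : Nonempty (Sys m) := by
  have hM : (100000 : ℝ) ≤ m := by exact_mod_cast hm
  have hex : ∀ i : {x // x ∈ Fam m}, ∃ p r : ℕ, p * sF i = qF i * r + 1 ∧
      Blk m p (qF i) r (sF i) := fun i => exists_block i.1 i.2
  choose p r det blk using hex
  have hcard : 8 * (m : ℝ) ^ 2 ≤ (Fam m).card := card_Fam m (by omega)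
  have : Nonempty {x // x ∈ Fam m} := by
    have h0 : (0 : ℝ) < (Fam m).card := lt_of_lt_of_le (by positivity) hcard
    obtain ⟨x, hx⟩ := Finset.card_pos.1 (by exact_mod_cast h0)
    exact ⟨⟨x, hx⟩⟩
  have hclosed : IsClosed {x : ℝ × ℝ | InQ m x.1 x.2} := by
    have e : {x : ℝ × ℝ | InQ m x.1 x.2} =
        {x | 1 / 4 ≤ x.1} ∩ ({x | x.1 ≤ 3 / 5} ∩ ({x | 0 ≤ x.2} ∩ {x | 4 * (m : ℝ) * x.2 ≤ 1})) := by
      ext x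
      exact ⟨fun h => ⟨h.ht1, h.ht2, h.hz1, h.hz2⟩, fun h => ⟨h.1, h.2.1, h.2.2.1, h.2.2.2⟩⟩
    rw [e]
    refine (isClosed_le ?_ ?_).inter ((isClosed_le ?_ ?_).inter
      ((isClosed_le ?_ ?_).inter (isClosed_le ?_ ?_))) <;> fun_prop
  have : CompleteSpace {x : ℝ × ℝ // InQ m x.1 x.2} := hclosed.completeSpace_coe
  have : Nonempty {x : ℝ × ℝ // InQ m x.1 x.2} :=
    ⟨⟨(1 / 2, 0), ⟨by norm_num, by norm_num, by norm_num, by norm_num⟩⟩⟩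
  let G : {x // x ∈ Fam m} → {x : ℝ × ℝ // InQ m x.1 x.2} → {x : ℝ × ℝ // InQ m x.1 x.2} :=
    fun i x => ⟨(Tc (p i) (qF i) (r i) (sF i) x.1.1 x.1.2, Zc (r i) (sF i) x.1.1 x.1.2),
      block_mem hM (blk i) x.2⟩
  have hG : ∀ i, LipschitzWith (1 / 2) (G i) := by
    intro i
    refine LipschitzWith.of_dist_le_mul fun x y => ?_
    have h1 : |x.1.1 - y.1.1| ≤ dist x y := by
      rw [Subtype.dist_eq, Prod.dist_eq, ← Real.dist_eq]; exact le_max_left _ _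
    have h2 : |x.1.2 - y.1.2| ≤ dist x y := by
      rw [Subtype.dist_eq, Prod.dist_eq, ← Real.dist_eq]; exact le_max_right _ _
    obtain ⟨g1, g2⟩ := block_lip hM (blk i) x.2 y.2 h1 h2
    rw [Subtype.dist_eq (G i x), Prod.dist_eq, Real.dist_eq, Real.dist_eq]
    have e : ((1 / 2 : NNReal) : ℝ) * dist x y = dist x y / 2 := by
      push_cast; ring
    rw [e]
    exact max_le g1 g2
  obtain ⟨P, π, hP, -, hπm, hfix, hself⟩ := exists_selfsimilar G hG
  exact ⟨{
    p := p
    r := r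
    det := det
    blk := blk
    t := fun ω => (π ω).1.1
    z := fun ω => (π ω).1.2
    ht := (measurable_subtype_coe.comp hπm).fst
    hz := (measurable_subtype_coe.comp hπm).snd
    inQ := fun ω => (π ω).2
    t_eq := fun ω => congrArg (fun x => x.1.1) (hfix ω)
    z_eq := fun ω => congrArg (fun x => x.1.2) (hfix ω)
    P := P
    prob := hP
    self := fun S H c hS h1 h2 =>
      hself ((fun x : {x : ℝ × ℝ // InQ m x.1 x.2} => x.1) ⁻¹' S) H c
        (measurable_subtype_coe hS) h1 h2 }⟩

/-- One renormalization step: a set met by at most `n` of the blocks, each carrying conditional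
mass at most `c`, has mass at most `n c / (8 m²)`. -/
lemma Sys.step {m : ℕ} (hm : 1 ≤ m) (Y : Sys m) {S : Set (ℝ × ℝ)} (hS : MeasurableSet S) {n c : ℝ}
    (hc : 0 ≤ c)
    (hn : ∀ H : Finset {x // x ∈ Fam m}, (∀ i ∈ H, ∃ ω, (Tc (Y.p i) (qF i) (Y.r i) (sF i)
      (Y.t ω) (Y.z ω), Zc (Y.r i) (sF i) (Y.t ω) (Y.z ω)) ∈ S) → (H.card : ℝ) ≤ n)
    (h : ∀ i ω, (Tc (Y.p i) (qF i) (Y.r i) (sF i) (Y.t ω) (Y.z ω),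
      Zc (Y.r i) (sF i) (Y.t ω) (Y.z ω)) ∈ S →
      Y.P.real {ω | (Tc (Y.p i) (qF i) (Y.r i) (sF i) (Y.t ω) (Y.z ω),
      Zc (Y.r i) (sF i) (Y.t ω) (Y.z ω)) ∈ S} ≤ c) :
    Y.P.real {ω | (Y.t ω, Y.z ω) ∈ S} ≤ n * c / (8 * (m : ℝ) ^ 2) := by
  classical
  set H : Finset {x // x ∈ Fam m} := Finset.univ.filter fun i =>
    ∃ ω, (Tc (Y.p i) (qF i) (Y.r i) (sF i) (Y.t ω) (Y.z ω),
      Zc (Y.r i) (sF i) (Y.t ω) (Y.z ω)) ∈ S with hH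
  have h1 := Y.self S H c hS (fun i hi => by simpa [hH] using hi) (fun i hi => by
    rw [hH, Finset.mem_filter] at hi
    obtain ⟨ω, hω⟩ := hi.2
    exact h i ω hω)
  have h2 := hn H (fun i hi => by
    rw [hH, Finset.mem_filter] at hi
    exact hi.2)
  have h3 : 8 * (m : ℝ) ^ 2 ≤ Fintype.card {x // x ∈ Fam m} := by
    rw [Fintype.card_coe]; exact card_Fam m hm
  have hm' : (0 : ℝ) < m := by exact_mod_cast hm
  have hn0 : 0 ≤ n := (Nat.cast_nonneg _).trans h2
  refine h1.trans ?_
  gcongr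

/-- A strip of width `δ` has mass `O(δ ^ α)` as soon as the mass contraction `805 / m` of one
renormalization step beats the widening `1000 m` of the strip. -/
lemma Sys.strip {m : ℕ} (hm : 100000 ≤ m) (Y : Sys m) {α : ℝ} (hα : 0 ≤ α)
    (hα' : 805 / (m : ℝ) * (1000 * m) ^ α ≤ 1) (n : ℕ) :
    ∀ κ η δ : ℝ, 1 / 2 ≤ κ → κ ≤ 3 → 0 < δ → 1 ≤ 100000 * m * δ * (1000 * m) ^ n →
      Y.P.real {ω | |κ * Y.t ω - Y.z ω - η| ≤ δ} ≤ (100000 * m * δ) ^ α := by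
  have hM : (100000 : ℝ) ≤ m := by exact_mod_cast hm
  have hm0 : (0 : ℝ) < m := by linarith
  have := Y.prob
  -- wide strips are covered by the trivial bound
  have triv : ∀ κ η δ : ℝ, 1 ≤ 100000 * m * δ →
      Y.P.real {ω | |κ * Y.t ω - Y.z ω - η| ≤ δ} ≤ (100000 * m * δ) ^ α :=
    fun κ η δ h => measureReal_le_one.trans (Real.one_le_rpow h hα)
  induction n with
  | zero => intro κ η δ _ _ _ h; exact triv κ η δ (by simpa using h)
  | succ n ih =>
    intro κ η δ hκ1 hκ2 hδ hn
    by_cases hbig : 1 ≤ 100000 * m * δ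
    · exact triv κ η δ hbig
    push Not at hbig
    set c : ℝ := (100000 * m * (1000 * m * δ)) ^ α with hc
    have hS : MeasurableSet {x : ℝ × ℝ | |κ * x.1 - x.2 - η| ≤ δ} :=
      measurableSet_le (by fun_prop) (by fun_prop)
    have key := Y.step (by omega) hS (n := 6440 * m) (c := c) (by positivity) ?_ ?_
    · refine key.trans ?_
      have e : c = (1000 * m) ^ α * (100000 * m * δ) ^ α := by
        rw [hc, ← Real.mul_rpow (by positivity) (by positivity)]; ring_nf
      have e2 : 6440 * m * c / (8 * (m : ℝ) ^ 2)
          = (805 / (m : ℝ) * (1000 * m) ^ α) * (100000 * m * δ) ^ α := by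
        rw [e]; field_simp; ring
      rw [e2]
      exact mul_le_of_le_one_left (by positivity) hα'
    · intro H hH
      have := card_strip_hits (m := m) (η / κ) H ?_
      · exact_mod_cast this
      intro i hi
      obtain ⟨ω, hω⟩ := hH i hi
      simp only [Set.mem_ofPred_eq] at hω
      change |(qF i : ℝ) - η / κ * (sF i : ℝ)| ≤ 80
      have hB := Y.blk i
      obtain ⟨n1, n2⟩ := Tc_near hM hB (Y.inQ ω)
      have hQ := block_mem hM hB (Y.inQ ω)
      generalize Tc (Y.p i) (qF i) (Y.r i) (sF i) (Y.t ω) (Y.z ω) = T at *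
      generalize Zc (Y.r i) (sF i) (Y.t ω) (Y.z ω) = Z at *
      have hs : (0 : ℝ) < sF i := by linarith [hB.hs1]
      have hκ : 0 < κ := by linarith
      have hZ : Z ≤ 1 / (4 * m) := by rw [le_div_iff₀ (by positivity)]; linarith [hQ.hz2]
      have hδ2 : δ ≤ 1 / (4 * m) := by rw [le_div_iff₀ (by positivity)]; nlinarith
      have g1 : |T - η / κ| ≤ 1 / m := by
        have e : T - η / κ = (κ * T - η) / κ := by field_simp
        rw [e, abs_div, abs_of_pos hκ, div_le_iff₀ hκ]
        have h1 : (1 : ℝ) / m * (1 / 2) ≤ 1 / m * κ := by gcongr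
        have h2 : (1 : ℝ) / (4 * m) = 1 / m * (1 / 4) := by field_simp
        rw [abs_le] at hω ⊢
        have := hQ.hz1
        constructor <;> linarith
      have g2 : (1 : ℝ) / (15 * m ^ 2) ≤ 1 / m := by gcongr; nlinarith
      have g3 : |(qF i : ℝ) / sF i - η / κ| ≤ 2 / m := by
        have : (2 : ℝ) / m = 1 / m + 1 / m := by ring
        rw [abs_le] at g1 ⊢
        constructor <;> linarith
      have e : (qF i : ℝ) - η / κ * sF i = ((qF i : ℝ) / sF i - η / κ) * sF i := by field_simp
      rw [e, abs_mul, abs_of_pos hs]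
      calc _ ≤ 2 / (m : ℝ) * (40 * m) := by gcongr; exact hB.hs2
        _ = 80 := by field_simp; norm_num
    · intro i ω hω
      obtain ⟨κ', η', h1, h2, -, h3⟩ :=
        pull_strip hM (Y.blk i) hκ1 hκ2 (by linarith) (Y.inQ ω) hω
      refine le_trans (measureReal_mono ?_) (ih κ' η' (1000 * m * δ) h1 h2 (by positivity) ?_)
      · intro ω' hω'
        exact h3 _ _ (Y.inQ ω') hω'
      · refine hn.trans (le_of_eq ?_); ring

/-- A box of width `δ` and length `L` has mass `O(δ ^ α L ^ β)` as soon as the mass contraction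
`1000 / m²` of one step beats the widening `1000 m` and the lengthening `20000 m²`. -/
lemma Sys.box {m : ℕ} (hm : 100000 ≤ m) (Y : Sys m) {α β : ℝ} (hα : 0 ≤ α) (hβ : 0 ≤ β)
    (hα' : 805 / (m : ℝ) * (1000 * m) ^ α ≤ 1)
    (hβ' : 1000 / (m : ℝ) ^ 2 * ((1000 * m) ^ α * (20000 * m ^ 2) ^ β) ≤ 1) (n : ℕ) :
    ∀ κ η θ δ L : ℝ, 1 / 2 ≤ κ → κ ≤ 3 → 0 < δ → δ ≤ L → 1 ≤ m ^ 2 * L * (20000 * m ^ 2) ^ n →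
      Y.P.real {ω | |κ * Y.t ω - Y.z ω - η| ≤ δ ∧ |Y.t ω - θ| ≤ L}
        ≤ (100000 * m * δ) ^ α * (m ^ 2 * L) ^ β := by
  have hM : (100000 : ℝ) ≤ m := by exact_mod_cast hm
  have hm0 : (0 : ℝ) < m := by linarith
  have := Y.prob
  -- long boxes are covered by the bound for strips
  have triv : ∀ κ η θ δ L : ℝ, 1 / 2 ≤ κ → κ ≤ 3 → 0 < δ → 1 ≤ m ^ 2 * L →
      Y.P.real {ω | |κ * Y.t ω - Y.z ω - η| ≤ δ ∧ |Y.t ω - θ| ≤ L}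
        ≤ (100000 * m * δ) ^ α * (m ^ 2 * L) ^ β := by
    intro κ η θ δ L hκ1 hκ2 hδ hL
    obtain ⟨k, hk⟩ := pow_unbounded_of_one_lt (1 / (100000 * m * δ))
      (by linarith : (1 : ℝ) < 1000 * m)
    rw [div_lt_iff₀ (by positivity)] at hk
    have h1 := Y.strip hm hα hα' k κ η δ hκ1 hκ2 hδ (by linarith)
    refine (measureReal_mono fun ω h => h.1).trans (h1.trans ?_)
    exact le_mul_of_one_le_right (by positivity) (Real.one_le_rpow hL hβ)
  induction n with
  | zero => intro κ η θ δ L h1 h2 h3 _ h; exact triv κ η θ δ L h1 h2 h3 (by simpa using h)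
  | succ n ih =>
    intro κ η θ δ L hκ1 hκ2 hδ hδL hn
    by_cases hbig : 1 ≤ m ^ 2 * L
    · exact triv κ η θ δ L hκ1 hκ2 hδ hbig
    push Not at hbig
    have hL : 0 < L := by linarith
    have hδ1 : 100000 * m * δ ≤ 1 := by
      calc 100000 * m * δ ≤ m * m * L := by gcongr
        _ ≤ 1 := by rw [← pow_two]; exact hbig.le
    set c : ℝ := (100000 * m * (1000 * m * δ)) ^ α * (m ^ 2 * (20000 * m ^ 2 * L)) ^ β with hc
    have hS : MeasurableSet {x : ℝ × ℝ | |κ * x.1 - x.2 - η| ≤ δ ∧ |x.1 - θ| ≤ L} :=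
      (measurableSet_le (f := fun x : ℝ × ℝ => |κ * x.1 - x.2 - η|) (by fun_prop)
        measurable_const).inter
        (measurableSet_le (f := fun x : ℝ × ℝ => |x.1 - θ|) (by fun_prop) measurable_const)
    have key := Y.step (by omega) hS (n := 6402) (c := c) (by positivity) ?_ ?_
    · refine key.trans ?_
      have e : c = ((1000 * m) ^ α * (20000 * m ^ 2) ^ β)
          * ((100000 * m * δ) ^ α * (m ^ 2 * L) ^ β) := by
        rw [hc, show 100000 * (m : ℝ) * (1000 * m * δ) = (1000 * m) * (100000 * m * δ) by ring,
          show (m : ℝ) ^ 2 * (20000 * m ^ 2 * L) = (20000 * m ^ 2) * (m ^ 2 * L) by ring,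
          Real.mul_rpow (x := 1000 * (m : ℝ)) (by positivity) (by positivity),
          Real.mul_rpow (x := 20000 * (m : ℝ) ^ 2) (by positivity) (by positivity)]
        ring
      have e2 : 6402 * c / (8 * (m : ℝ) ^ 2) ≤ 1000 / (m : ℝ) ^ 2 * c := by
        rw [div_mul_eq_mul_div, div_le_div_iff₀ (by positivity) (by positivity)]
        have : 0 ≤ c * (m : ℝ) ^ 2 := by positivity
        nlinarith
      refine e2.trans ?_
      rw [e, ← mul_assoc]
      exact mul_le_of_le_one_left (by positivity) hβ'
    · intro H hH
      have := card_box_hits (m := m) (by omega) θ H ?_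
      · exact_mod_cast this
      intro i hi
      obtain ⟨ω, hω⟩ := hH i hi
      simp only [Set.mem_ofPred_eq] at hω
      change |(qF i : ℝ) / (sF i : ℝ) - θ| ≤ 2 / (m : ℝ) ^ 2
      obtain ⟨n1, n2⟩ := Tc_near hM (Y.blk i) (Y.inQ ω)
      have hL2 : L ≤ 1 / (m : ℝ) ^ 2 := by rw [le_div_iff₀ (by positivity)]; linarith
      have g2 : (1 : ℝ) / (15 * m ^ 2) ≤ 1 / m ^ 2 := by gcongr; nlinarith
      have : (2 : ℝ) / m ^ 2 = 1 / m ^ 2 + 1 / m ^ 2 := by ring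
      have h2 := hω.2
      rw [abs_le] at h2 ⊢
      constructor <;> linarith
    · intro i ω hω
      obtain ⟨κ', η', h1, h2, h0, h3⟩ :=
        pull_strip hM (Y.blk i) hκ1 hκ2 hδ1 (Y.inQ ω) hω.1
      refine le_trans (measureReal_mono ?_) (ih κ' η' (Y.t ω) (1000 * m * δ) (20000 * m ^ 2 * L)
        h1 h2 (by positivity) ?_ ?_)
      · intro ω' hω'
        exact ⟨h3 _ _ (Y.inQ ω') hω'.1, pull_t hM (Y.blk i) h0 hδL (Y.inQ ω') (Y.inQ ω)
          (h3 _ _ (Y.inQ ω') hω'.1) (h3 _ _ (Y.inQ ω) hω.1) hω'.2 hω.2⟩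
      · gcongr
        · norm_num
        · nlinarith
      · refine hn.trans (le_of_eq ?_); ring

/-! ### Mass distribution -/

/-- Mass distribution principle for the image of a coding map. -/
lemma le_dimH_of_ball_le {Ω E : Type*} [MeasurableSpace Ω] (P : Measure Ω) [IsProbabilityMeasure P]
    [MetricSpace E] [MeasurableSpace E] [BorelSpace E] {x : Ω → E} (hx : Measurable x)
    {X : Set E} (hX : ∀ ω, x ω ∈ X) {d : NNReal} (hd : 0 < d) {K : ℝ} (hK : 0 < K)
    (h : ∀ ω r, 0 < r → P.real {ω' | dist (x ω') (x ω) ≤ r} ≤ K * r ^ (d : ℝ)) :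
    (d : ENNReal) ≤ dimH X := by
  have hK0 : ENNReal.ofReal K ≠ 0 := by simpa using hK
  have hd0 : (0 : ℝ) < d := by exact_mod_cast hd
  have hle : (ENNReal.ofReal K)⁻¹ • P.map x ≤ μH[(d : ℝ)] := by
    refine Measure.le_hausdorffMeasure _ _ 1 one_pos fun s hs => ?_
    rw [Measure.smul_apply, smul_eq_mul, ENNReal.inv_mul_le_iff hK0 ENNReal.ofReal_ne_top]
    refine (measure_mono subset_closure).trans ?_
    rw [Measure.map_apply hx isClosed_closure.measurableSet]
    rcases (x ⁻¹' closure s).eq_empty_or_nonempty with h0 | ⟨ω, hω⟩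
    · rw [h0]; simp
    have hs' : Metric.ediam (closure s) ≤ 1 := by rwa [Metric.ediam_closure]
    have hfin : Metric.ediam (closure s) ≠ ⊤ := (hs'.trans_lt ENNReal.one_lt_top).ne
    have hreal : P.real (x ⁻¹' closure s) ≤ K * Metric.diam (closure s) ^ (d : ℝ) := by
      have hcont : Filter.Tendsto (fun r : ℝ => K * r ^ (d : ℝ))
          (nhdsWithin (Metric.diam (closure s)) (Set.Ioi (Metric.diam (closure s))))
          (nhds (K * Metric.diam (closure s) ^ (d : ℝ))) :=
        (((Real.continuous_rpow_const hd0.le).const_mul K).tendsto _).mono_left nhdsWithin_le_nhds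
      refine ge_of_tendsto hcont ?_
      filter_upwards [self_mem_nhdsWithin] with r hr
      rw [Set.mem_Ioi] at hr
      refine le_trans (measureReal_mono ?_) (h ω r (Metric.diam_nonneg.trans_lt hr))
      intro ω' hω'
      exact (Metric.dist_le_diam_of_mem' hfin hω' hω).trans hr.le
    rw [← Metric.ediam_closure s, ← ENNReal.ofReal_toReal hfin,
      ENNReal.ofReal_rpow_of_nonneg ENNReal.toReal_nonneg hd0.le, ← ENNReal.ofReal_mul hK.le,
      ENNReal.le_ofReal_iff_toReal_le (measure_ne_top _ _) (by positivity)]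
    exact hreal
  refine le_dimH_of_hausdorffMeasure_ne_zero fun h0 => ?_
  have h1 := hle X
  rw [h0, Measure.smul_apply, smul_eq_mul, nonpos_iff_eq_zero, mul_eq_zero] at h1
  rcases h1 with h1 | h1
  · exact ENNReal.inv_ne_zero.2 ENNReal.ofReal_ne_top h1
  · have h2 := Measure.le_map_apply (μ := P) hx.aemeasurable X
    have h3 : x ⁻¹' X = Set.univ := Set.eq_univ_of_forall hX
    rw [h3, measure_univ, h1] at h2
    simp at h2

/-- The chart `(t, z)` is Lipschitz in the Euclidean metric of the simplex. -/
lemma chart_lip {t z t' z' r : ℝ} (ht1 : 1 / 4 ≤ t) (ht2 : t ≤ 3 / 5) (hz1 : 0 ≤ z)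
    (hz2 : z ≤ 1 / 10) (ht1' : 1 / 4 ≤ t') (ht2' : t' ≤ 3 / 5) (hz1' : 0 ≤ z') (hz2' : z' ≤ 1 / 10)
    (h : dist (nrm (bary t z)) (nrm (bary t' z')) ≤ r) : |t - t'| ≤ 6 * r ∧ |z - z'| ≤ 6 * r := by
  have hco : ∀ i, |(omega3 (bary t z))⁻¹ * bary t z i - (omega3 (bary t' z'))⁻¹ * bary t' z' i|
      ≤ r := by
    intro i
    refine le_trans ?_ h
    rw [dist_eq_norm, ← Real.norm_eq_abs]
    exact PiLp.norm_apply_le (nrm (bary t z) - nrm (bary t' z')) i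
  have hw : omega3 (bary t z) = 1 + t - z := by simp [omega3, bary]; ring
  have hw' : omega3 (bary t' z') = 1 + t' - z' := by simp [omega3, bary]; ring
  have h0 := hco 0
  have h1 := hco 1
  have h2 := hco 2
  rw [hw, hw'] at h0 h1 h2
  simp only [bary, Matrix.cons_val_zero, Matrix.cons_val_one, Matrix.cons_val_two]
    at h0 h1 h2
  have e : (1 + t - z)⁻¹ * (1 + t - z) = 1 := inv_mul_cancel₀ (by linarith)
  have e' : (1 + t' - z')⁻¹ * (1 + t' - z') = 1 := inv_mul_cancel₀ (by linarith)
  have hu : 0 < (1 + t - z)⁻¹ := inv_pos.2 (by linarith)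
  have hu1 : 5 / 8 ≤ (1 + t - z)⁻¹ := by
    rw [le_inv_comm₀ (by norm_num) (by linarith)]; linarith
  generalize (1 + t - z)⁻¹ = u at *
  generalize (1 + t' - z')⁻¹ = u' at *
  rw [abs_le] at h0 h1 h2
  have hr : 0 ≤ r := by linarith [h0.1, h0.2]
  have a1 : |u - u'| ≤ 2 * r := by rw [abs_le]; constructor <;> nlinarith
  have a2 : |u * t - u' * t'| ≤ 2 * r := by rw [abs_le]; constructor <;> nlinarith
  have a3 : |u * z - u' * z'| ≤ r := by rw [abs_le]; exact h2
  have b1 : |t' * (u - u')| ≤ 3 / 5 * (2 * r) := by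
    rw [abs_mul, abs_of_pos (by linarith : 0 < t')]; gcongr
  have b2 : |z' * (u - u')| ≤ 1 / 10 * (2 * r) := by
    rw [abs_mul, abs_of_nonneg hz1']; gcongr
  have c1 : u * |t - t'| ≤ 2 * r + 3 / 5 * (2 * r) := by
    rw [← abs_of_pos hu, ← abs_mul,
      show u * (t - t') = (u * t - u' * t') - t' * (u - u') by ring]
    exact (abs_sub _ _).trans (add_le_add a2 b1)
  have c2 : u * |z - z'| ≤ r + 1 / 10 * (2 * r) := by
    rw [← abs_of_pos hu, ← abs_mul,
      show u * (z - z') = (u * z - u' * z') - z' * (u - u') by ring]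
    exact (abs_sub _ _).trans (add_le_add a3 b2)
  constructor
  · nlinarith [abs_nonneg (t - t')]
  · nlinarith [abs_nonneg (z - z')]

lemma measurable_nrm_bary {Ω : Type*} [MeasurableSpace Ω] {t z : Ω → ℝ} (ht : Measurable t)
    (hz : Measurable z) : Measurable fun ω => nrm (bary (t ω) (z ω)) := by
  have h : Measurable fun ω => (omega3 (bary (t ω) (z ω)))⁻¹ • bary (t ω) (z ω) := by
    rw [measurable_pi_iff]
    intro i
    fin_cases i <;> simp [omega3, bary] <;> fun_prop
  exact (WithLp.measurable_toLp 2 (Fin 3 → ℝ)).comp h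

/-- Both contraction conditions hold for exponents `1 - ε` and `1 / 2 - ε` once `m` is large. -/
lemma exists_scale {ε : ℝ} (hε : 0 < ε) (hε' : ε < 1 / 2) : ∃ m : ℕ, 100000 ≤ m ∧
    805 / (m : ℝ) * (1000 * m) ^ (1 - ε) ≤ 1 ∧
    1000 / (m : ℝ) ^ 2 * ((1000 * m) ^ (1 - ε) * (20000 * m ^ 2) ^ (1 / 2 - ε)) ≤ 1 := by
  have hlim : Filter.Tendsto (fun m : ℕ => (m : ℝ) ^ ε) Filter.atTop Filter.atTop :=
    (tendsto_rpow_atTop hε).comp tendsto_natCast_atTop_atTop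
  obtain ⟨m, h1, h2⟩ := ((hlim.eventually_ge_atTop (20000000000 : ℝ)).and
    (Filter.eventually_ge_atTop 100000)).exists
  have hm : (0 : ℝ) < m := by exact_mod_cast (by omega : 0 < m)
  have hx : 0 < (m : ℝ) ^ ε := by positivity
  have e1 : (1000 * (m : ℝ)) ^ (1 - ε) ≤ 1000 * (m / (m : ℝ) ^ ε) := by
    rw [Real.mul_rpow (by norm_num) hm.le, Real.rpow_sub hm, Real.rpow_one]
    gcongr
    calc (1000 : ℝ) ^ (1 - ε) ≤ 1000 ^ (1 : ℝ) :=
          Real.rpow_le_rpow_of_exponent_le (by norm_num) (by linarith)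
      _ = 1000 := Real.rpow_one _
  have e2 : (20000 * (m : ℝ) ^ 2) ^ (1 / 2 - ε) ≤ 20000 * (m / ((m : ℝ) ^ ε) ^ 2) := by
    rw [Real.mul_rpow (by norm_num) (by positivity), ← Real.rpow_natCast (m : ℝ) 2,
      ← Real.rpow_mul hm.le, ← Real.rpow_natCast ((m : ℝ) ^ ε) 2, ← Real.rpow_mul hm.le,
      show ((2 : ℕ) : ℝ) * (1 / 2 - ε) = 1 - ε * (2 : ℕ) by push_cast; ring, Real.rpow_sub hm,
      Real.rpow_one]
    gcongr
    calc (20000 : ℝ) ^ (1 / 2 - ε) ≤ 20000 ^ (1 : ℝ) :=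
          Real.rpow_le_rpow_of_exponent_le (by norm_num) (by linarith)
      _ = 20000 := Real.rpow_one _
  refine ⟨m, h2, ?_, ?_⟩
  · calc _ ≤ 805 / (m : ℝ) * (1000 * (m / (m : ℝ) ^ ε)) := by gcongr
      _ = 805000 / (m : ℝ) ^ ε := by field_simp; norm_num
      _ ≤ 1 := by rw [div_le_one hx]; linarith
  · calc _ ≤ 1000 / (m : ℝ) ^ 2 * ((1000 * (m / (m : ℝ) ^ ε)) *
          (20000 * (m / ((m : ℝ) ^ ε) ^ 2))) := by gcongr
      _ = 20000000000 / ((m : ℝ) ^ ε) ^ 3 := by field_simp; norm_num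
      _ ≤ 1 := by
        rw [div_le_one (by positivity)]
        exact h1.trans (le_self_pow₀ (by linarith) (by norm_num))

lemma dimH_gasket_ge {ε : ℝ} (hε : 0 < ε) (hε' : ε < 1 / 2) :
    ENNReal.ofReal (3 / 2 - 2 * ε) ≤ dimH gasket := by
  obtain ⟨m, hm, hα, hβ⟩ := exists_scale hε hε'
  obtain ⟨Y⟩ := exists_sys hm
  have hM : (100000 : ℝ) ≤ m := by exact_mod_cast hm
  have hm0 : (0 : ℝ) < m := by linarith
  have := Y.prob
  have hd : (((3 / 2 - 2 * ε).toNNReal : NNReal) : ℝ) = 3 / 2 - 2 * ε :=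
    Real.coe_toNNReal _ (by linarith)
  refine le_dimH_of_ball_le Y.P (measurable_nrm_bary Y.ht Y.hz)
    (K := (100000 * m * 12) ^ (1 - ε) * (m ^ 2 * 12) ^ (1 / 2 - ε)) (fun ω => ?_)
    (Real.toNNReal_pos.2 (by linarith)) (by positivity) fun ω r hr => ?_
  · refine mem_gasket_of_coding Y.t Y.z (fun ω n => ω (n + 1)) (fun ω => ?_) (fun ω => ?_) ω
    · have hQ := Y.inQ ω
      have hz := hQ.z_le hM
      have h1 := hQ.ht1
      have h2 := hQ.hz1
      refine ⟨fun i => ?_, ?_⟩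
      · fin_cases i <;> simp [bary] <;> linarith
      · simp [omega3, bary]; linarith
    · have hB := Y.blk (ω 0)
      obtain ⟨h1, h2, h3⟩ := Dn_bounds hM hB (Y.inQ fun n => ω (n + 1))
      refine ⟨Y.p (ω 0), qF (ω 0), Y.r (ω 0), sF (ω 0), Y.det _, ?_, by linarith, Y.t_eq ω,
        Y.z_eq ω⟩
      have : (2 : ℝ) ≤ sF (ω 0) := by linarith
      exact_mod_cast this
  · -- a ball of radius `r` lies in a box of slope `1` whose width and length are both `12 r`
    have hbox : Y.P.real {ω' | |1 * Y.t ω' - Y.z ω' - (Y.t ω - Y.z ω)| ≤ 12 * r ∧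
        |Y.t ω' - Y.t ω| ≤ 12 * r}
        ≤ (100000 * m * (12 * r)) ^ (1 - ε) * (m ^ 2 * (12 * r)) ^ (1 / 2 - ε) := by
      obtain ⟨k, hk⟩ := pow_unbounded_of_one_lt (1 / (m ^ 2 * (12 * r)))
        (by nlinarith : (1 : ℝ) < 20000 * m ^ 2)
      rw [div_lt_iff₀ (by positivity)] at hk
      exact Y.box hm (by linarith) (by linarith) hα hβ k 1 _ _ _ _ (by norm_num) (by norm_num)
        (by positivity) le_rfl (by linarith)
    refine (measureReal_mono fun ω' hω' => ?_).trans (hbox.trans (le_of_eq ?_))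
    · have hQ := Y.inQ ω
      have hz := hQ.z_le hM
      have hQ' := Y.inQ ω'
      have hz' := hQ'.z_le hM
      obtain ⟨h1, h2⟩ := chart_lip hQ'.ht1 hQ'.ht2 hQ'.hz1 (by linarith) hQ.ht1 hQ.ht2 hQ.hz1
        (by linarith) hω'
      rw [abs_le] at h1 h2
      simp only [Set.mem_ofPred_eq, abs_le]
      refine ⟨⟨?_, ?_⟩, ?_, ?_⟩ <;> linarith
    · rw [hd, ← mul_assoc, ← mul_assoc, Real.mul_rpow (y := r) (by positivity) hr.le,
        Real.mul_rpow (y := r) (by positivity) hr.le,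
        show 3 / 2 - 2 * ε = (1 - ε) + (1 / 2 - ε) by ring, Real.rpow_add hr]
      ring

/-- The Hausdorff dimension of the Rauzy gasket is at least 3/2. -/
theorem rauzy_dimH_ge_three_halves : (3 / 2 : ENNReal) ≤ dimH gasket := by
  have hlim : Filter.Tendsto (fun ε : ℝ => ENNReal.ofReal (3 / 2 - 2 * ε))
      (nhdsWithin 0 (Set.Ioi 0)) (nhds (ENNReal.ofReal (3 / 2 - 2 * 0))) :=
    ((ENNReal.continuous_ofReal.comp
      (by fun_prop : Continuous fun ε : ℝ => 3 / 2 - 2 * ε)).tendsto 0).mono_left nhdsWithin_le_nhds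
  have e : ENNReal.ofReal (3 / 2 - 2 * 0) = 3 / 2 := by
    rw [mul_zero, sub_zero, ENNReal.ofReal_div_of_pos (by norm_num)]
    simp
  rw [← e]
  refine le_of_tendsto hlim ?_
  filter_upwards [Ioo_mem_nhdsGT (show (0 : ℝ) < 1 / 2 by norm_num)] with ε hε
  exact dimH_gasket_ge hε.1 hε.2
end

section
/- Let w be a nonempty word with letters in {1,2,3} and let i ∈ {1,2,3} be a letter that occurs in w. Then the vector v = (A_w)ᵗ e_i (the transpose of A_w applied to the i-th standard basis vector of ℝ³) has all three coordinates strictly positive, and each coordinate of v is strictly smaller than the sum of the other two coordinates (i.e. v lies in the open projective triangle Δ' with vertices (0,1,1), (1,0,1), (1,1,0)). -/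
/-!
The vector `(A_w)ᵗ e_i` is obtained from `e_i` by applying `A_{i₁}ᵗ, A_{i₂}ᵗ, …` in this order,
where `A_jᵗ` adds the `j`-th coordinate of a vector to each of the other two. As long as the letter
`i` has not been read, the vector stays equal to `e_i`; at the first occurrence of `i` it becomes
`(1, 1, 1)`, which lies in the open triangle; and every `A_jᵗ` maps the open triangle into itself
(`InTriangle.step`). The theorem follows by induction on `w`, appending letters on the right.
-/

open Matrix MeasureTheory

/-- The open cone over the projective triangle with vertices `(0,1,1)`, `(1,0,1)`, `(1,1,0)`:
positive coordinates satisfying the strict triangle inequalities. -/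
def InTriangle (v : Fin 3 → ℝ) : Prop :=
  (∀ j, 0 < v j) ∧ v 0 < v 1 + v 2 ∧ v 1 < v 0 + v 2 ∧ v 2 < v 0 + v 1

theorem A_transpose_mulVec (j : Fin 3) (v : Fin 3 → ℝ) (k : Fin 3) :
    ((A j)ᵀ *ᵥ v) k = if k = j then v k else v k + v j := by
  fin_cases j <;> fin_cases k <;>
    simp [A, Matrix.mulVec, dotProduct, Fin.sum_univ_three] <;> ring

theorem Aw_append_transpose_mulVec (u : List (Fin 3)) (j : Fin 3) (v : Fin 3 → ℝ) :
    (Aw (u ++ [j]))ᵀ *ᵥ v = (A j)ᵀ *ᵥ ((Aw u)ᵀ *ᵥ v) := by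
  simp [Aw, Matrix.transpose_mul, Matrix.mulVec_mulVec]

theorem InTriangle.step {v : Fin 3 → ℝ} (hv : InTriangle v) (j : Fin 3) :
    InTriangle ((A j)ᵀ *ᵥ v) := by
  obtain ⟨hpos, h0, h1, h2⟩ := hv
  have p0 := hpos 0
  have p1 := hpos 1
  have p2 := hpos 2
  refine ⟨fun k => ?_, ?_, ?_, ?_⟩
  · rw [A_transpose_mulVec]
    split_ifs
    · exact hpos k
    · exact add_pos (hpos k) (hpos j)
  all_goals
    simp only [A_transpose_mulVec]
    fin_cases j <;> simp <;> linarith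

theorem A_transpose_basis3_of_ne {i j : Fin 3} (h : j ≠ i) :
    (A j)ᵀ *ᵥ basis3 i = basis3 i := by
  ext k
  rw [A_transpose_mulVec]
  simp [basis3, h]

theorem inTriangle_A_transpose_basis3 (i : Fin 3) : InTriangle ((A i)ᵀ *ᵥ basis3 i) := by
  have hone : ∀ k, ((A i)ᵀ *ᵥ basis3 i) k = 1 := by
    intro k
    rw [A_transpose_mulVec]
    by_cases hk : k = i <;> simp [basis3, hk]
  simp only [InTriangle, hone]
  norm_num

theorem Aw_transpose_basis3_of_notMem (w : List (Fin 3)) (i : Fin 3) (hi : i ∉ w) :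
    (Aw w)ᵀ *ᵥ basis3 i = basis3 i := by
  induction w using List.reverseRecOn with
  | nil => simp [Aw]
  | append_singleton u j ih =>
    simp only [List.mem_append, List.mem_singleton, not_or] at hi
    rw [Aw_append_transpose_mulVec, ih hi.1, A_transpose_basis3_of_ne (Ne.symm hi.2)]

theorem inTriangle_Aw_transpose_basis3 (w : List (Fin 3)) (i : Fin 3) (hi : i ∈ w) :
    InTriangle ((Aw w)ᵀ *ᵥ basis3 i) := by
  induction w using List.reverseRecOn with
  | nil => simp at hi
  | append_singleton u j ih =>
    rw [Aw_append_transpose_mulVec]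
    by_cases hu : i ∈ u
    · exact (ih hu).step j
    · have hj : i = j := by simpa [hu] using hi
      rw [Aw_transpose_basis3_of_notMem u i hu, ← hj]
      exact inTriangle_A_transpose_basis3 i

/-- If the letter `i` occurs in the nonempty word `w`, then `(A_w)ᵗ e_i` has strictly
positive coordinates, each smaller than the sum of the other two. -/
theorem transpose_image_in_open_triangle (w : List (Fin 3)) (hw : w ≠ [])
    (i : Fin 3) (hi : i ∈ w) :
    (∀ j, 0 < ((Aw w)ᵀ *ᵥ basis3 i) j) ∧
    ((Aw w)ᵀ *ᵥ basis3 i) 0 < ((Aw w)ᵀ *ᵥ basis3 i) 1 + ((Aw w)ᵀ *ᵥ basis3 i) 2 ∧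
    ((Aw w)ᵀ *ᵥ basis3 i) 1 < ((Aw w)ᵀ *ᵥ basis3 i) 0 + ((Aw w)ᵀ *ᵥ basis3 i) 2 ∧
    ((Aw w)ᵀ *ᵥ basis3 i) 2 < ((Aw w)ᵀ *ᵥ basis3 i) 0 + ((Aw w)ᵀ *ᵥ basis3 i) 1 :=
  inTriangle_Aw_transpose_basis3 w i hi
end
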